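/- arXiv:2106.14605 — 2 statements merged into one kernel-verified Lean document; each statement's English description precedes it below -/
import Mathlib

section
/- Let s ≥ 1 and n = 6·2^s − 3. (i) Let A1 be the set of 12 monomials obtained by assigning the exponents 2^{s+2}−1, 2^s−1, 2^s−1 to three distinct variables among x_1,...,x_4 (the remaining variable having exponent 0). The Σ_4-submodule of Q_n generated by the class of x_2^{2^s−1}x_3^{2^s−1}x_4^{2^{s+2}−1} equals the span of the classes of the monomials in A1, and its subspace of Σ_4-invariants is one-dimensional, spanned by the class of the sum of all monomials in A1. (ii) Let A2 be the set of 12 monomials obtained by assigning the exponents 2^s−1, 2^{s+1}−1, 3·2^s−1 to three distinct variables such that the variable carrying 2^{s+1}−1 has smaller index than the variable carrying 3·2^s−1. The Σ_4-submodule of Q_n generated by the class of x_2^{2^s−1}x_3^{2^{s+1}−1}x_4^{3·2^s−1} equals the span of the classes of the monomials in A2, and its subspace of Σ_4-invariants is spanned by the class of the sum of all monomials in A2. (iii) Let A3 be the set of 4 monomials x_i^{2^{s+1}−1}x_j^{2^{s+1}−1}x_k^{2^{s+1}−1} with 1 ≤ i < j < k ≤ 4. The Σ_4-submodule of Q_n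 generated by the class of x_2^{2^{s+1}−1}x_3^{2^{s+1}−1}x_4^{2^{s+1}−1} equals the span of the classes of the monomials in A3, and its subspace of Σ_4-invariants is spanned by the class of the sum of all monomials in A3. -/
/-!
Common setup: the polynomial algebra `P_4 = F_2[x_1,x_2,x_3,x_4]` (variables `X 0, ..., X 3`),
the Steenrod action, hit polynomials, the cohit spaces `Q_n`, and the (induced) actions of
`GL_4(F_2)` and of the symmetric group `Σ_4` on `Q_n`.
-/

open MvPolynomial

noncomputable section

abbrev kk : Type := ZMod 2
abbrev P4 : Type := MvPolynomial (Fin 4) kk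

/-- The total Steenrod square: the algebra endomorphism of `P4` with `X i ↦ X i + (X i)^2`.
For `g` homogeneous of degree `d`, `Sq^t g` is the degree-`d+t` homogeneous component
of `sqTotal g`. -/
def sqTotal : P4 →ₐ[kk] P4 := aeval fun i => X i + X i ^ 2

/-- The homogeneous polynomials of degree `n`, i.e. `(P_4)_n`, as a submodule. -/
def homog (n : ℕ) : Submodule kk P4 := homogeneousSubmodule (Fin 4) kk n

/-- The subspace `H_n` of hit polynomials of degree `n`: it is spanned by the elements
`Sq^{n-d}(g) = (sqTotal g)_n` for `g` homogeneous of degree `d < n`, i.e. by all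
`∑_{t>0} Sq^t(f_t)` with `f_t ∈ (P_4)_{n-t}`. -/
def hitSub (n : ℕ) : Submodule kk P4 :=
  Submodule.span kk
    {p | ∃ d, d < n ∧ ∃ g ∈ homog d, p = homogeneousComponent n (sqTotal g)}

/-- The cohit space `Q_n = (P_4)_n / H_n`. -/
abbrev Qn (n : ℕ) :=
  ↥(homog n) ⧸ ((hitSub n).comap (homog n).subtype)

/-- Projection of a polynomial onto its degree-`n` part, landing in `homog n`. -/
def toHomog (n : ℕ) : P4 →ₗ[kk] homog n :=
  (homogeneousComponent n).codRestrict (homog n) fun f => homogeneousComponent_mem n f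

/-- The class in `Q_n` of (the degree-`n` component of) a polynomial.  For `f`
homogeneous of degree `n` this is the class `[f]` of `f`. -/
def Qmk (n : ℕ) : P4 →ₗ[kk] Qn n :=
  ((hitSub n).comap (homog n).subtype).mkQ.comp (toHomog n)

/-- Substitution action of a matrix `M`: the algebra endomorphism `X i ↦ ∑ j M i j • X j`. -/
def substM (M : Matrix (Fin 4) (Fin 4) kk) : P4 →ₐ[kk] P4 :=
  aeval fun i => ∑ j, M i j • X j

/-- The set of invertible `4 × 4` matrices over `F_2`, i.e. `GL_4(F_2)`. -/
def glSet : Set (Matrix (Fin 4) (Fin 4) kk) := {M | IsUnit M}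

/-- The set of permutation matrices, i.e. `Σ_4 ⊆ GL_4(F_2)`. -/
def permSet : Set (Matrix (Fin 4) (Fin 4) kk) :=
  {M | ∃ σ : Equiv.Perm (Fin 4), M = σ.toPEquiv.toMatrix}

/-- Homogeneous polynomials of degree `n` whose class in `Q_n` is invariant under every
element of `G` (the action on classes being induced by `substM`): for every `M ∈ G`,
`M·f - f` is hit. -/
def invPre (n : ℕ) (G : Set (Matrix (Fin 4) (Fin 4) kk)) : Submodule kk P4 :=
  homog n ⊓ ⨅ M ∈ G, (hitSub n).comap ((substM M).toLinearMap - LinearMap.id)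

/-- The subspace `(Q_n)^G` of `G`-invariant classes in `Q_n`. -/
def QInv (n : ℕ) (G : Set (Matrix (Fin 4) (Fin 4) kk)) : Submodule kk (Qn n) :=
  (invPre n G).map (Qmk n)

/-- The `Σ_4`-submodule of `Q_n` generated by the classes of the polynomials in `S`:
the span of the classes of all the permuted polynomials `σ · f`, `σ ∈ Σ_4`, `f ∈ S`. -/
def permSpan (n : ℕ) (S : Set P4) : Submodule kk (Qn n) :=
  Submodule.span kk
    {c | ∃ σ : Equiv.Perm (Fin 4), ∃ f ∈ S, c = Qmk n (rename (⇑σ) f)}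

/-- The set `A1` of the 12 monomials with exponents `2^{s+2}-1, 2^s-1, 2^s-1` on three
distinct variables. -/
def A1set (s : ℕ) : Set P4 :=
  {f | ∃ i j l : Fin 4, i ≠ j ∧ i ≠ l ∧ j ≠ l ∧
    f = X i ^ (2 ^ (s + 2) - 1) * X j ^ (2 ^ s - 1) * X l ^ (2 ^ s - 1)}

/-- The sum of the 12 monomials of `A1`. -/
def A1sum (s : ℕ) : P4 :=
  ∑ i : Fin 4, ∑ j : Fin 4, ∑ l : Fin 4,
    if i ≠ j ∧ i ≠ l ∧ j ≠ l ∧ j < l then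
      X i ^ (2 ^ (s + 2) - 1) * X j ^ (2 ^ s - 1) * X l ^ (2 ^ s - 1)
    else 0

/-- The set `A2` of the 12 monomials with exponents `2^s-1, 2^{s+1}-1, 3·2^s-1` on three
distinct variables, the variable carrying `2^{s+1}-1` having smaller index than the variable
carrying `3·2^s-1`. -/
def A2set (s : ℕ) : Set P4 :=
  {f | ∃ i j l : Fin 4, i ≠ j ∧ i ≠ l ∧ j ≠ l ∧ j < l ∧
    f = X i ^ (2 ^ s - 1) * X j ^ (2 ^ (s + 1) - 1) * X l ^ (3 * 2 ^ s - 1)}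

/-- The sum of the 12 monomials of `A2`. -/
def A2sum (s : ℕ) : P4 :=
  ∑ i : Fin 4, ∑ j : Fin 4, ∑ l : Fin 4,
    if i ≠ j ∧ i ≠ l ∧ j ≠ l ∧ j < l then
      X i ^ (2 ^ s - 1) * X j ^ (2 ^ (s + 1) - 1) * X l ^ (3 * 2 ^ s - 1)
    else 0

/-- The set `A3` of the 4 monomials `x_i^{2^{s+1}-1} x_j^{2^{s+1}-1} x_k^{2^{s+1}-1}`,
`i < j < k`. -/
def A3set (s : ℕ) : Set P4 :=
  {f | ∃ i j l : Fin 4, i < j ∧ j < l ∧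
    f = X i ^ (2 ^ (s + 1) - 1) * X j ^ (2 ^ (s + 1) - 1) * X l ^ (2 ^ (s + 1) - 1)}

/-- The sum of the 4 monomials of `A3`. -/
def A3sum (s : ℕ) : P4 :=
  ∑ i : Fin 4, ∑ j : Fin 4, ∑ l : Fin 4,
    if i < j ∧ j < l then
      X i ^ (2 ^ (s + 1) - 1) * X j ^ (2 ^ (s + 1) - 1) * X l ^ (2 ^ (s + 1) - 1)
    else 0

/-! ### helper lemmas -/

/-- coefficients of `(T+T^2)^k` mod 2 -/
def BB (k e : ℕ) : kk := ((Polynomial.X + Polynomial.X ^ 2 : Polynomial kk) ^ k).coeff e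

lemma coeff_prod_aeval (p : Fin 4 → Polynomial kk) (e : Fin 4 →₀ ℕ) :
    coeff e (∏ i, Polynomial.aeval (X i : P4) (p i)) = ∏ i, (p i).coeff (e i) := by
  classical
  have h : ∀ i, Polynomial.aeval (X i : P4) (p i) =
      ∑ j ∈ (p i).support, (monomial (Finsupp.single i j) ((p i).coeff j) : P4) := by
    intro i
    rw [Polynomial.aeval_def, Polynomial.eval₂_eq_sum, Polynomial.sum]
    refine Finset.sum_congr rfl fun j _ => ?_
    rw [monomial_eq]
    simp [algebraMap_eq]
  simp only [h]
  rw [Finset.prod_univ_sum, coeff_sum]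
  have h2 : ∀ x : Fin 4 → ℕ, coeff e (∏ i, (monomial (Finsupp.single i (x i)) ((p i).coeff (x i)) : P4))
      = if x = e then ∏ i, (p i).coeff (e i) else 0 := by
    intro x
    rw [← monomial_sum_prod, coeff_monomial]
    have hx : (∑ i, Finsupp.single i (x i)) = Finsupp.equivFunOnFinite.symm x := by
      ext t
      simp [Finsupp.finsetSum_apply, Finsupp.single_apply]
    rw [hx]
    by_cases h : x = e
    · subst h
      simp
    · rw [if_neg h, if_neg]
      rintro rfl
      exact h rfl
  simp only [h2]
  rw [Finset.sum_ite_eq']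
  split_ifs with hm
  · rfl
  · simp only [Fintype.mem_piFinset, Polynomial.mem_support_iff, not_forall, not_not] at hm
    obtain ⟨i, hi⟩ := hm
    exact (Finset.prod_eq_zero (Finset.mem_univ i) hi).symm

lemma coeff_sq_monomial (m e : Fin 4 →₀ ℕ) :
    coeff e (sqTotal (monomial m 1)) = ∏ i, BB (m i) (e i) := by
  have : sqTotal (monomial m 1) =
      ∏ i, Polynomial.aeval (X i : P4) ((Polynomial.X + Polynomial.X ^ 2 : Polynomial kk) ^ (m i)) := by
    rw [sqTotal, aeval_monomial, Finsupp.prod_fintype _ _ (by simp)]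
    simp
  rw [this, coeff_prod_aeval]
  rfl

lemma BB_eq (k e : ℕ) : BB k e = ((if k ≤ e then (Nat.choose k (e - k)) else 0 : ℕ) : kk) := by
  have : (Polynomial.X + Polynomial.X ^ 2 : Polynomial kk) = Polynomial.X * (1 + Polynomial.X) := by
    ring
  rw [BB, this, mul_pow, Polynomial.coeff_X_pow_mul']
  split_ifs
  · rw [Polynomial.coeff_one_add_X_pow]
  · simp

lemma BB_lt {k e : ℕ} (h : e < k) : BB k e = 0 := by rw [BB_eq, if_neg (by omega)]; simp
lemma BB_gt {k e : ℕ} (h : 2 * k < e) : BB k e = 0 := by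
  rw [BB_eq, Nat.choose_eq_zero_of_lt (by omega)]; simp
lemma BB_self (k : ℕ) : BB k k = 1 := by simp [BB_eq]
lemma BB_two (k : ℕ) : BB k (2 * k) = 1 := by
  rw [BB_eq, if_pos (by omega), show 2 * k - k = k by omega]; simp

lemma BB_even_odd (k e : ℕ) : BB (2 * k) (2 * e + 1) = 0 := by
  rw [BB, pow_mul', ← ZMod.expand_card, Polynomial.coeff_expand (by norm_num), if_neg (by omega)]
lemma BB_odd_odd (k e : ℕ) : BB (2 * k + 1) (2 * e + 1) = BB k e := by
  have h : ((Polynomial.X + Polynomial.X ^ 2 : Polynomial kk) ^ (2 * k + 1)) =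
      (Polynomial.expand kk 2 ((Polynomial.X + Polynomial.X ^ 2 : Polynomial kk) ^ k)
       + Polynomial.expand kk 2 ((Polynomial.X + Polynomial.X ^ 2 : Polynomial kk) ^ k)
        * Polynomial.X) * Polynomial.X := by
    rw [ZMod.expand_card]; ring
  rw [BB, h, Polynomial.coeff_mul_X, Polynomial.coeff_add,
    Polynomial.coeff_expand (by norm_num), if_pos (by omega), Nat.mul_div_cancel_left _ (by norm_num)]
  rcases e with _ | e
  · simp [BB]
  · rw [show 2 * (e + 1) = 2 * e + 1 + 1 by ring, Polynomial.coeff_mul_X,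
      Polynomial.coeff_expand (by norm_num), if_neg (by omega), add_zero, BB]

lemma BB_spike (s : ℕ) : ∀ k, BB k (2 ^ s - 1) = if k = 2 ^ s - 1 then 1 else 0 := by
  induction s with
  | zero =>
    intro k
    rcases Nat.eq_zero_or_pos k with rfl | h
    · simp [BB]
    · rw [BB_lt (by simpa using h), if_neg (by simp; omega)]
  | succ s ih =>
    intro k
    have hp := Nat.one_le_two_pow (n := s)
    have e1 : 2 ^ (s + 1) - 1 = 2 * (2 ^ s - 1) + 1 := by rw [pow_succ]; omega
    rw [e1]
    obtain ⟨j, rfl | rfl⟩ := Nat.even_or_odd' k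
    · rw [BB_even_odd, if_neg (by omega)]
    · rw [BB_odd_odd, ih]
      congr 1
      simp

lemma BB_three (s : ℕ) : ∀ k, BB k (3 * 2 ^ s - 1) =
    (if k = 3 * 2 ^ s - 1 then 1 else 0) + (if k = 2 ^ (s + 1) - 1 then 1 else 0) := by
  induction s with
  | zero =>
    intro k
    rcases Nat.lt_or_ge 2 k with h | h
    · rw [BB_lt (by simpa using h), if_neg (by simp; omega), if_neg (by simp; omega)]; simp
    · interval_cases k <;> simp [BB_eq]
  | succ s ih =>
    intro k
    have hp := Nat.one_le_two_pow (n := s)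
    have e1 : 3 * 2 ^ (s + 1) - 1 = 2 * (3 * 2 ^ s - 1) + 1 := by rw [pow_succ]; omega
    have e2 : 2 ^ (s + 1 + 1) - 1 = 2 * (2 ^ (s + 1) - 1) + 1 := by
      rw [pow_succ _ (s + 1), pow_succ]; omega
    rw [e1, e2]
    obtain ⟨j, rfl | rfl⟩ := Nat.even_or_odd' k
    · rw [BB_even_odd, if_neg (by omega), if_neg (by omega)]; simp
    · rw [BB_odd_odd, ih]
      simp

lemma BB_deg (m e : Fin 4 →₀ ℕ) (h : ∏ i, BB (m i) (e i) ≠ 0) : ∀ i, m i ≤ e i ∧ e i ≤ 2 * m i := by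
  intro i
  have := (Finset.prod_ne_zero_iff.1 h) i (Finset.mem_univ i)
  constructor
  · by_contra hc
    exact this (BB_lt (by omega))
  · by_contra hc
    exact this (BB_gt (by omega))

lemma deg_eq (m : Fin 4 →₀ ℕ) : m.degree = m 0 + m 1 + m 2 + m 3 := by
  rw [Finsupp.degree_eq_sum, Fin.sum_univ_four]

lemma comp_low {d n : ℕ} (hn : n ≤ d) {g : P4} (hg : g.IsHomogeneous d) :
    homogeneousComponent n (sqTotal g) = homogeneousComponent n g := by
  rw [as_sum g, map_sum, map_sum, map_sum]
  refine Finset.sum_congr rfl fun m hm => ?_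
  have hmd : m.degree = d := by
    have := hg (mem_support_iff.1 hm)
    rw [← this, Finsupp.degree_eq_weight_one]; rfl
  have hc : coeff m g = 1 := by
    have := mem_support_iff.1 hm
    generalize coeff m g = a at this
    revert a; decide
  rw [hc]
  ext e
  rw [coeff_homogeneousComponent, coeff_homogeneousComponent, coeff_sq_monomial, coeff_monomial]
  split_ifs with h1 h2
  · subst h2; simp [BB_self]
  · by_contra hne
    have := BB_deg m e hne
    apply h2
    rw [deg_eq] at h1 hmd
    have t0 := this 0
    have t1 := this 1
    have t2 := this 2
    have t3 := this 3
    ext i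
    fin_cases i <;> simp <;> omega
  · rfl

lemma comp_top (m : Fin 4 →₀ ℕ) :
    homogeneousComponent (2 * m.degree) (sqTotal (monomial m 1)) = monomial m 1 ^ 2 := by
  ext e
  rw [coeff_homogeneousComponent, coeff_sq_monomial, monomial_pow, coeff_monomial]
  split_ifs with h1 h2 h2
  · subst h2
    simp [BB_two]
  · by_contra hne
    have := BB_deg m e hne
    apply h2
    rw [deg_eq, deg_eq] at h1
    have t0 := this 0
    have t1 := this 1
    have t2 := this 2
    have t3 := this 3
    ext i
    fin_cases i <;> simp <;> omega
  · subst h2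
    simp at h1
  · rfl

lemma Qmk_eq_zero_iff (n : ℕ) (f : P4) :
    Qmk n f = 0 ↔ homogeneousComponent n f ∈ hitSub n := by
  unfold Qmk toHomog
  simp only [LinearMap.comp_apply, Submodule.mkQ_apply, Submodule.Quotient.mk_eq_zero,
    Submodule.mem_comap, Submodule.subtype_apply]
  rfl

lemma Qmk_homog_ne {n d : ℕ} {f : P4} (hf : f.IsHomogeneous d) (h : d ≠ n) : Qmk n f = 0 := by
  rw [Qmk_eq_zero_iff, homogeneousComponent_of_mem (n := d) hf, if_neg (Ne.symm h)]
  exact Submodule.zero_mem _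

lemma sum_comp (f : P4) : f = ∑ i ∈ Finset.range (f.totalDegree + 1), homogeneousComponent i f :=
  (sum_homogeneousComponent f).symm

/-- an additive map killing the wrong degrees only depends on the component of degree `n` -/
lemma L_comp {M : Type*} [AddCommGroup M] (n : ℕ) (L : P4 →+ M)
    (h1 : ∀ d, d ≠ n → ∀ g : P4, g.IsHomogeneous d → L g = 0) (f : P4) :
    L (homogeneousComponent n f) = L f := by
  conv_rhs => rw [sum_comp f]
  rw [map_sum]
  by_cases hn : n ∈ Finset.range (f.totalDegree + 1)
  · rw [Finset.sum_eq_single_of_mem n hn]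
    intro b _ hb
    exact h1 b hb _ (homogeneousComponent_isHomogeneous b f)
  · rw [Finset.sum_eq_zero]
    · rw [homogeneousComponent_eq_zero, map_zero]
      simpa using hn
    · intro b hb
      exact h1 b (by rintro rfl; exact hn hb) _ (homogeneousComponent_isHomogeneous b f)

lemma Qmk_sq (n : ℕ) (g : P4) : Qmk n (sqTotal g) = Qmk n g := by
  have key : ∀ d, ∀ g : P4, g.IsHomogeneous d → Qmk n (sqTotal g) = Qmk n g := by
    intro d g hg
    rcases Nat.lt_or_ge d n with h | h
    · rw [Qmk_homog_ne hg h.ne, Qmk_eq_zero_iff]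
      exact Submodule.subset_span ⟨d, h, g, hg, rfl⟩
    · rw [← sub_eq_zero, ← map_sub, Qmk_eq_zero_iff, map_sub, comp_low h hg, sub_self]
      exact Submodule.zero_mem _
  conv_lhs => rw [sum_comp g]
  conv_rhs => rw [sum_comp g]
  simp only [map_sum]
  exact Finset.sum_congr rfl fun i _ => key i _ (homogeneousComponent_isHomogeneous i g)

lemma gen_zero {M : Type*} [AddCommGroup M] (n : ℕ) (L : P4 →+ M)
    (h1 : ∀ d, d ≠ n → ∀ g : P4, g.IsHomogeneous d → L g = 0)
    (h2 : ∀ g, L (sqTotal g) = L g) (f : P4) (hf : Qmk n f = 0) : L f = 0 := by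
  rw [Qmk_eq_zero_iff] at hf
  rw [← L_comp n L h1]
  generalize homogeneousComponent n f = p at hf
  unfold hitSub at hf
  induction hf using Submodule.span_induction with
  | mem x hx =>
    obtain ⟨d, hd, g, hg, rfl⟩ := hx
    rw [L_comp n L h1, h2]
    exact h1 d hd.ne g hg
  | zero => simp
  | add x y _ _ hx hy => simp [hx, hy]
  | smul a x _ hx =>
    have : a = 0 ∨ a = 1 := by revert a; decide
    rcases this with rfl | rfl <;> simp [hx]

lemma substM_perm (σ : Equiv.Perm (Fin 4)) :
    substM (σ.toPEquiv.toMatrix) = rename (R := kk) σ := by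
  apply MvPolynomial.algHom_ext
  intro i
  simp [substM, PEquiv.toMatrix_apply, Equiv.toPEquiv_apply]

lemma sq_rename (σ : Equiv.Perm (Fin 4)) (f : P4) :
    sqTotal (rename σ f) = rename σ (sqTotal f) := by
  have : sqTotal.comp (rename σ) = (rename (R := kk) σ).comp sqTotal := by
    apply MvPolynomial.algHom_ext
    intro i
    simp [sqTotal]
  exact DFunLike.congr_fun this f

lemma Q_rename {n : ℕ} (σ : Equiv.Perm (Fin 4)) {f g : P4} (h : Qmk n f = Qmk n g) :
    Qmk n (rename σ f) = Qmk n (rename σ g) := by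
  have := gen_zero n ((Qmk n).toAddMonoidHom.comp (rename (R := kk) σ).toRingHom.toAddMonoidHom)
    (by
      intro d hd g hg
      exact Qmk_homog_ne (hg.rename_isHomogeneous) hd)
    (by
      intro g
      change Qmk n (rename σ (sqTotal g)) = Qmk n (rename σ g)
      rw [← sq_rename, Qmk_sq]) (f - g) (by rw [map_sub, h, sub_self])
  change Qmk n (rename σ (f - g)) = 0 at this
  rwa [map_sub, map_sub, sub_eq_zero] at this

/-- Compatible functionals. -/
def Compat (n : ℕ) (φ : P4 →+ kk) : Prop :=
  (∀ d, d ≠ n → ∀ g : P4, g.IsHomogeneous d → φ g = 0) ∧ ∀ g, φ (sqTotal g) = φ g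

lemma Compat.eq {n : ℕ} {φ : P4 →+ kk} (h : Compat n φ) {f g : P4} (hfg : Qmk n f = Qmk n g) :
    φ f = φ g := by
  have := gen_zero n φ h.1 h.2 (f - g) (by rw [map_sub, hfg, sub_self])
  rwa [map_sub, sub_eq_zero] at this

lemma mem_QInv (n : ℕ) (c : Qn n) :
    c ∈ QInv n permSet ↔ ∃ f : P4, f.IsHomogeneous n ∧ Qmk n f = c ∧
      ∀ σ : Equiv.Perm (Fin 4), Qmk n (rename σ f) = Qmk n f := by
  have aux : ∀ f : P4, f.IsHomogeneous n → ∀ σ : Equiv.Perm (Fin 4),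
      (substM (σ.toPEquiv.toMatrix) f - f ∈ hitSub n ↔ Qmk n (rename σ f) = Qmk n f) := by
    intro f hf σ
    rw [substM_perm, ← sub_eq_zero, ← map_sub, Qmk_eq_zero_iff,
      homogeneousComponent_of_mem (n := n) (hf.rename_isHomogeneous.sub hf), if_pos rfl]
  constructor
  · rintro ⟨f, ⟨hf, hi⟩, rfl⟩
    refine ⟨f, hf, rfl, fun σ => ?_⟩
    rw [← aux f hf]
    simp only [SetLike.mem_coe, Submodule.mem_iInf] at hi
    exact hi _ ⟨σ, rfl⟩
  · rintro ⟨f, hf, rfl, h⟩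
    refine ⟨f, ⟨hf, ?_⟩, rfl⟩
    simp only [SetLike.mem_coe, Submodule.mem_iInf]
    rintro M ⟨σ, rfl⟩
    exact (aux f hf σ).2 (h σ)

lemma main_T (n : ℕ) {ι : Type*} [Fintype ι] [DecidableEq ι] (v : ι → P4) (φ : ι → P4 →+ kk)
    (hv : ∀ i, (v i).IsHomogeneous n) (hφ : ∀ i, Compat n (φ i))
    (hδ : ∀ i j, φ i (v j) = if i = j then 1 else 0)
    (hact : ∀ σ : Equiv.Perm (Fin 4), ∀ i, ∃ j, Qmk n (rename σ (v i)) = Qmk n (v j))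
    (i0 : ι) (htr : ∀ j, ∃ σ : Equiv.Perm (Fin 4), Qmk n (rename σ (v i0)) = Qmk n (v j)) :
    permSpan n {v i0} = Submodule.span kk (Qmk n '' Set.range v) ∧
    permSpan n {v i0} ⊓ QInv n permSet = Submodule.span kk {Qmk n (∑ i, v i)} ∧
    Qmk n (∑ i, v i) ≠ 0 := by
  have h1 : permSpan n {v i0} = Submodule.span kk (Qmk n '' Set.range v) := by
    unfold permSpan
    congr 1
    ext c
    constructor
    · rintro ⟨σ, f, rfl, rfl⟩
      obtain ⟨j, hj⟩ := hact σ i0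
      exact ⟨v j, ⟨j, rfl⟩, hj.symm⟩
    · rintro ⟨_, ⟨j, rfl⟩, rfl⟩
      obtain ⟨σ, h⟩ := htr j
      exact ⟨σ, _, rfl, h.symm⟩
  have hinj : ∀ i j, Qmk n (v i) = Qmk n (v j) → i = j := by
    intro i j h
    have := (hφ i).eq h
    rw [hδ, hδ, if_pos rfl] at this
    by_contra hne
    simp [hne] at this
  choose act hact using hact
  have actinj : ∀ σ, Function.Injective (act σ) := by
    intro σ i j h
    apply hinj
    have h2 : Qmk n (rename σ (v i)) = Qmk n (rename σ (v j)) := by rw [hact, hact, h]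
    have h3 := Q_rename σ⁻¹ h2
    have hid : (⇑σ⁻¹ ∘ ⇑σ) = id := by funext x; simp
    simpa only [rename_rename, hid, rename_id_apply] using h3
  have actbij : ∀ σ, Function.Bijective (act σ) := fun σ =>
    Finite.injective_iff_bijective.1 (actinj σ)
  have hinv : ∀ σ : Equiv.Perm (Fin 4),
      Qmk n (rename σ (∑ i, v i)) = Qmk n (∑ i, v i) := by
    intro σ
    simp only [map_sum, hact]
    exact (actbij σ).sum_comp (fun i => Qmk n (v i))
  refine ⟨h1, ?_, ?_⟩
  · apply le_antisymm
    · rintro c ⟨hc1, hc2⟩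
      rw [h1, ← Set.range_comp] at hc1
      obtain ⟨a, ha⟩ := (Submodule.mem_span_range_iff_exists_fun kk).1 hc1
      obtain ⟨f, hf, rfl, hfi⟩ := (mem_QInv n c).1 hc2
      have hfa : Qmk n f = Qmk n (∑ i, a i • v i) := by
        rw [← ha]; simp
      have sm : ∀ (ψ : P4 →+ kk) (x : kk) (p : P4), ψ (x • p) = x * ψ p := by
        intro ψ x p
        have : x = 0 ∨ x = 1 := by revert x; decide
        rcases this with rfl | rfl <;> simp
      have hc : ∀ i, φ i f = a i := by
        intro i
        rw [(hφ i).eq hfa, map_sum]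
        simp [sm, hδ]
      have hall : ∀ j, a j = a i0 := by
        intro j
        obtain ⟨σ, h⟩ := htr j
        have hj : act σ i0 = j := hinj _ _ (by rw [← hact, h])
        have e1 : Qmk n f = Qmk n (∑ i, a i • v (act σ i)) := by
          rw [← hfi σ, Q_rename σ hfa]
          simp [hact]
        rw [← hc j, (hφ j).eq e1, map_sum]
        simp only [sm, hδ, ← hj, (actinj σ).eq_iff]
        simp
      rw [Submodule.mem_span_singleton]
      refine ⟨a i0, ?_⟩
      rw [hfa]
      simp [hall, Finset.smul_sum]
    · rw [Submodule.span_le]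
      rintro _ rfl
      constructor
      · rw [SetLike.mem_coe, h1, map_sum]
        exact Submodule.sum_mem _ fun i _ => Submodule.subset_span ⟨_, ⟨i, rfl⟩, rfl⟩
      · rw [SetLike.mem_coe, mem_QInv]
        exact ⟨_, IsHomogeneous.sum _ _ _ fun i _ => hv i, rfl, hinv⟩
  · intro h
    have := (hφ i0).eq (h.trans (map_zero (Qmk n)).symm)
    simp [hδ] at this

lemma L_zero {M : Type*} [AddCommGroup M] (L : P4 →+ M)
    (h1 : ∀ d, ∀ g : P4, g.IsHomogeneous d → L g = 0) (f : P4) : L f = 0 := by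
  rw [sum_comp f, map_sum]
  exact Finset.sum_eq_zero fun i _ => h1 i _ (homogeneousComponent_isHomogeneous i f)

/-- `f ↦ [p f]` -/
def Lmul (n : ℕ) (p : P4) : P4 →+ Qn n :=
  (Qmk n).toAddMonoidHom.comp (AddMonoidHom.mulLeft p)

lemma Lmul_apply (n : ℕ) (p f : P4) : Lmul n p f = Qmk n (p * f) := rfl

lemma isHom_X_pow (z : Fin 4) (k : ℕ) : (X z ^ k : P4).IsHomogeneous k := by
  simpa using (isHomogeneous_X kk z).pow k

lemma isHom_mono (m : Fin 4 →₀ ℕ) : (monomial m 1 : P4).IsHomogeneous m.degree :=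
  isHomogeneous_monomial _ rfl

lemma char2 (a : P4) : a + a = 0 := CharTwo.add_self_eq_zero a

lemma sq_W (z : Fin 4) (K : ℕ) :
    sqTotal (∑ k ∈ Finset.range K, X z ^ (2 ^ k)) = X z + X z ^ (2 ^ K) := by
  induction K with
  | zero => simp [char2]
  | succ K ih =>
    rw [Finset.sum_range_succ, map_add, ih, map_pow]
    have : sqTotal (X z) = X z + X z ^ 2 := by simp [sqTotal]
    rw [this, add_pow_char_pow, ← pow_mul, ← pow_succ']
    linear_combination char2 (X z ^ 2 ^ K)

lemma zm2_hit (z : Fin 4) (m : Fin 4 →₀ ℕ) (h : ∀ k, 2 ^ k ≠ m.degree + 1) :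
    Qmk (2 * m.degree + 1) (X z * monomial m 1 ^ 2) = 0 := by
  set e := m.degree with he
  set N := 2 * e + 1 with hN
  have hNlt : N < 2 ^ N := Nat.lt_two_pow_self
  have h1 : Qmk N (sqTotal ((∑ k ∈ Finset.range N, X z ^ (2 ^ k)) * monomial m 1)) = 0 := by
    rw [Qmk_sq, Finset.sum_mul, map_sum]
    refine Finset.sum_eq_zero fun k _ => ?_
    refine Qmk_homog_ne ((isHom_X_pow z _).mul (isHom_mono m)) ?_
    have := h k
    omega
  rw [map_mul, sq_W, add_mul, map_add] at h1
  have h2 : Qmk N (X z ^ 2 ^ N * sqTotal (monomial m 1)) = 0 := by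
    rw [← Lmul_apply]
    apply L_zero
    intro d g hg
    refine Qmk_homog_ne ((isHom_X_pow z _).mul hg) ?_
    omega
  rw [h2, add_zero, ← Lmul_apply, ← L_comp (2 * e), he, comp_top] at h1
  · exact h1
  · intro d hd g hg
    refine Qmk_homog_ne ((isHomogeneous_X kk z).mul hg) ?_
    omega

/-- `f ↦ [p f^2]` -/
def Lsq (n : ℕ) (p : P4) : P4 →+ Qn n :=
  (Lmul n p).comp (frobenius P4 2).toAddMonoidHom

lemma Lsq_apply (n : ℕ) (p f : P4) : Lsq n p f = Qmk n (p * f ^ 2) := rfl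

lemma zh2_hit (e : ℕ) (h : ∀ k, 2 ^ k ≠ e + 1) (z : Fin 4) (f : P4) :
    Qmk (2 * e + 1) (X z * f ^ 2) = 0 := by
  rw [← Lsq_apply, as_sum f, map_sum]
  refine Finset.sum_eq_zero fun m hm => ?_
  have hc : coeff m f = 1 := by
    have := mem_support_iff.1 hm
    generalize coeff m f = a at this
    revert a; decide
  rw [hc, Lsq_apply]
  by_cases hd : m.degree = e
  · subst hd
    exact zm2_hit z m h
  · exact Qmk_homog_ne ((isHomogeneous_X kk z).mul ((isHom_mono m).pow 2)) (by omega)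

lemma kameko (n : ℕ) (h : ∀ k, 2 ^ k ≠ n + 2) (x y z : Fin 4) (f : P4) (hf : Qmk n f = 0) :
    Qmk (2 * n + 3) (X x * X y * X z * f ^ 2) = 0 := by
  have hX := fun i => isHomogeneous_X kk (σ := Fin 4) i
  rw [← Lsq_apply]
  refine gen_zero n _ ?_ ?_ f hf
  · intro d hd g hg
    exact Qmk_homog_ne ((((hX x).mul (hX y)).mul (hX z)).mul (hg.pow 2)) (by omega)
  · intro g
    have ev : ∀ (p : P4) (k : ℕ), p.IsHomogeneous (2 * k) → ∀ q, Qmk (2 * n + 3) (p * q ^ 2) = 0 := by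
      intro p k hp q
      rw [← Lsq_apply]
      apply L_zero
      intro d g hg
      exact Qmk_homog_ne (hp.mul (hg.pow 2)) (by omega)
    rw [Lsq_apply, Lsq_apply, ← Qmk_sq _ (X x * X y * X z * g ^ 2)]
    simp only [map_mul, map_pow]
    have hS : ∀ i, sqTotal (X i) = X i + X i ^ 2 := by intro i; simp [sqTotal]
    simp only [hS]
    generalize sqTotal g = G
    have hh := zh2_hit (n + 1) (fun k => h k)
    rw [show 2 * (n + 1) + 1 = 2 * n + 3 by ring] at hh
    have expand : (X x + X x ^ 2) * (X y + X y ^ 2) * (X z + X z ^ 2) * G ^ 2 =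
      X x * X y * X z * G ^ 2 + (X x ^ 2 * X y * X z) * G ^ 2 + (X x * X y ^ 2 * X z) * G ^ 2
      + (X x * X y * X z ^ 2) * G ^ 2 + (X x ^ 2 * X y ^ 2 * X z ^ 2) * G ^ 2
      + X x * (X y * X z * G) ^ 2 + X y * (X x * X z * G) ^ 2 + X z * (X x * X y * G) ^ 2 := by ring
    rw [expand]
    simp only [map_add, hh]
    rw [ev _ 2 ((((hX x).pow 2).mul (hX y)).mul (hX z)),
      ev _ 2 (((hX x).mul ((hX y).pow 2)).mul (hX z)),
      ev _ 2 (((hX x).mul (hX y)).mul ((hX z).pow 2)),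
      ev _ 3 ((((hX x).pow 2).mul ((hX y).pow 2)).mul ((hX z).pow 2))]
    simp

lemma rel_hit (i j l : Fin 4) (s : ℕ) :
    Qmk (6 * 2 ^ s - 3) (X i ^ (2 ^ s - 1) * X j ^ (2 ^ (s + 1) - 1) * X l ^ (3 * 2 ^ s - 1)) =
    Qmk (6 * 2 ^ s - 3) (X i ^ (2 ^ s - 1) * X l ^ (2 ^ (s + 1) - 1) * X j ^ (3 * 2 ^ s - 1)) := by
  rw [← sub_eq_zero, ← map_sub, CharTwo.sub_eq_add]
  induction s with
  | zero =>
    have hX := fun i => isHomogeneous_X kk (σ := Fin 4) i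
    have h := Qmk_sq 3 (X j * X l : P4)
    have hS : ∀ i, sqTotal (X i) = X i + X i ^ 2 := by intro i; simp [sqTotal]
    rw [map_mul, hS, hS] at h
    have e : (X j + X j ^ 2 : P4) * (X l + X l ^ 2) =
      X j * X l + (X j * X l ^ 2 + X l * X j ^ 2) + X j ^ 2 * X l ^ 2 := by ring
    rw [e, map_add, map_add, Qmk_homog_ne ((hX j).mul (hX l)) (by norm_num),
      Qmk_homog_ne (((hX j).pow 2).mul ((hX l).pow 2)) (by norm_num), zero_add, add_zero] at h
    simpa using h
  | succ s ih =>
    have hp := Nat.one_le_two_pow (n := s)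
    have e0 : 6 * 2 ^ (s + 1) - 3 = 2 * (6 * 2 ^ s - 3) + 3 := by rw [pow_succ]; omega
    have ea : 2 ^ (s + 1) - 1 = 2 * (2 ^ s - 1) + 1 := by rw [pow_succ]; omega
    have eb : 2 ^ (s + 1 + 1) - 1 = 2 * (2 ^ (s + 1) - 1) + 1 := by
      rw [pow_succ _ (s + 1), pow_succ]; omega
    have ec : 3 * 2 ^ (s + 1) - 1 = 2 * (3 * 2 ^ s - 1) + 1 := by rw [pow_succ]; omega
    have := kameko _ (by
      intro k hk
      rcases k with _ | k
      · omega
      · rw [pow_succ] at hk; omega) i j l _ ih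
    rw [e0, eb, ec, ← this, add_pow_char]
    congr 1
    generalize 2 ^ (s + 1) - 1 = b at *
    generalize 3 * 2 ^ s - 1 = c at *
    generalize 2 ^ s - 1 = a at *
    rw [ea]
    ring

lemma compat_of_mono {n : ℕ} {φ : P4 →+ kk}
    (h1 : ∀ d, d ≠ n → ∀ g : P4, g.IsHomogeneous d → φ g = 0)
    (h2 : ∀ m, φ (sqTotal (monomial m 1)) = φ (monomial m 1)) : Compat n φ := by
  refine ⟨h1, fun g => ?_⟩
  have key : ∀ m ∈ g.support, φ (sqTotal (monomial m (coeff m g))) = φ (monomial m (coeff m g)) := by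
    intro m hm
    have hc : coeff m g = 1 := by
      have := mem_support_iff.1 hm
      generalize coeff m g = a at this
      revert a; decide
    rw [hc, h2]
  conv_lhs => rw [as_sum g]
  conv_rhs => rw [as_sum g]
  simp only [map_sum]
  exact Finset.sum_congr rfl key

/-- coefficient functional -/
def cf (e : Fin 4 →₀ ℕ) : P4 →+ kk := (lcoeff kk e).toAddMonoidHom

lemma cf_apply (e : Fin 4 →₀ ℕ) (f : P4) : cf e f = coeff e f := rfl

lemma cf_homog {n d : ℕ} {e : Fin 4 →₀ ℕ} (he : e.degree = n) (hd : d ≠ n) {g : P4}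
    (hg : g.IsHomogeneous d) : cf e g = 0 := hg.coeff_eq_zero (by rw [he]; exact hd.symm)

lemma cf_mono (e m : Fin 4 →₀ ℕ) : cf e (monomial m 1) = if m = e then 1 else 0 := by
  rw [cf_apply, coeff_monomial]

lemma compat_spike {n : ℕ} {e : Fin 4 →₀ ℕ} (he : e.degree = n) (hs : ∀ t, ∃ k, e t = 2 ^ k - 1) :
    Compat n (cf e) := by
  refine compat_of_mono (fun d hd g hg => cf_homog he hd hg) fun m => ?_
  rw [cf_mono, cf_apply, coeff_sq_monomial]
  have : ∀ t, BB (m t) (e t) = if m t = e t then 1 else 0 := by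
    intro t
    obtain ⟨k, hk⟩ := hs t
    rw [hk, BB_spike]
  simp only [this, Finset.prod_ite_zero, Finset.prod_const_one]
  simp [DFunLike.ext_iff]

/-- exponent vector -/
def ex (i j l : Fin 4) (p q r : ℕ) : Fin 4 →₀ ℕ :=
  Finsupp.single i p + Finsupp.single j q + Finsupp.single l r

lemma ex_apply {i j l : Fin 4} (hij : i ≠ j) (hil : i ≠ l) (hjl : j ≠ l) (p q r : ℕ) (t : Fin 4) :
    ex i j l p q r t = if t = i then p else if t = j then q else if t = l then r else 0 := by
  simp only [ex, Finsupp.add_apply, Finsupp.single_apply]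
  split_ifs <;> grind

lemma ex_degree (i j l : Fin 4) (p q r : ℕ) : (ex i j l p q r).degree = p + q + r := by
  simp [ex]

lemma mm_eq (i j l : Fin 4) (p q r : ℕ) :
    (X i ^ p * X j ^ q * X l ^ r : P4) = monomial (ex i j l p q r) 1 := by
  simp [ex, X_pow_eq_monomial, monomial_mul]

lemma prod_three {s : ℕ} {e : Fin 4 →₀ ℕ} (l : Fin 4) (hs : ∀ t, t ≠ l → ∃ k, e t = 2 ^ k - 1)
    (hl : e l = 3 * 2 ^ s - 1) (m : Fin 4 →₀ ℕ) :
    ∏ t, BB (m t) (e t) =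
      (if m = e then 1 else 0) + (if m = e.update l (2 ^ (s + 1) - 1) then 1 else 0) := by
  rw [← Finset.mul_prod_erase _ _ (Finset.mem_univ l)]
  have : ∀ t ∈ Finset.univ.erase l, BB (m t) (e t) = if m t = e t then 1 else 0 := by
    intro t ht
    obtain ⟨k, hk⟩ := hs t (Finset.ne_of_mem_erase ht)
    rw [hk, BB_spike]
  rw [Finset.prod_congr rfl this, hl, BB_three, Finset.prod_ite_zero, Finset.prod_const_one]
  have e1 : m = e ↔ m l = 3 * 2 ^ s - 1 ∧ ∀ t ∈ Finset.univ.erase l, m t = e t := by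
    constructor
    · rintro rfl
      exact ⟨hl, fun _ _ => rfl⟩
    · rintro ⟨h1, h2⟩
      ext t
      by_cases ht : t = l
      · rw [ht, h1, hl]
      · exact h2 t (by simp [ht])
  have e2 : m = e.update l (2 ^ (s + 1) - 1) ↔
      m l = 2 ^ (s + 1) - 1 ∧ ∀ t ∈ Finset.univ.erase l, m t = e t := by
    constructor
    · rintro rfl
      refine ⟨by simp, fun t ht => ?_⟩
      have := Finset.ne_of_mem_erase ht
      simp [Finsupp.update_apply, this]
    · rintro ⟨h1, h2⟩
      ext t
      by_cases ht : t = l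
      · subst ht
        rw [h1]
        simp
      · rw [h2 t (by simp [ht])]
        simp [Finsupp.update_apply, ht]
  simp only [e1, e2, add_mul, ite_and]
  split_ifs <;> simp

lemma compat_A2 {n s : ℕ} (hn : n = 6 * 2 ^ s - 3) {i j l : Fin 4} (hij : i ≠ j) (hil : i ≠ l)
    (hjl : j ≠ l) :
    Compat n (cf (ex i j l (2 ^ s - 1) (2 ^ (s + 1) - 1) (3 * 2 ^ s - 1)) +
      cf (ex i l j (2 ^ s - 1) (2 ^ (s + 1) - 1) (3 * 2 ^ s - 1))) := by
  have hp := Nat.one_le_two_pow (n := s)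
  have hd : ∀ i j l, (ex i j l (2 ^ s - 1) (2 ^ (s + 1) - 1) (3 * 2 ^ s - 1)).degree = n := by
    intro i j l
    rw [ex_degree, hn, pow_succ]
    omega
  refine compat_of_mono (fun d hne g hg => ?_) fun m => ?_
  · rw [AddMonoidHom.add_apply, cf_homog (hd _ _ _) hne hg, cf_homog (hd _ _ _) hne hg, add_zero]
  · simp only [AddMonoidHom.add_apply, cf_mono]
    simp only [cf_apply, coeff_sq_monomial]
    have hsp : ∀ {i j l : Fin 4}, i ≠ j → i ≠ l → j ≠ l → ∀ t, t ≠ l → ∃ k,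
        ex i j l (2 ^ s - 1) (2 ^ (s + 1) - 1) (3 * 2 ^ s - 1) t = 2 ^ k - 1 := by
      intro i j l hij hil hjl t ht
      rw [ex_apply hij hil hjl, if_neg ht]
      split_ifs
      · exact ⟨s, rfl⟩
      · exact ⟨s + 1, rfl⟩
      · exact ⟨0, rfl⟩
    rw [prod_three (s := s) l (hsp hij hil hjl)
        (by rw [ex_apply hij hil hjl]; simp [hil.symm, hjl.symm]),
      prod_three (s := s) j (hsp hil hij hjl.symm)
        (by rw [ex_apply hil hij hjl.symm]; simp [hij.symm, hjl])]
    have hu : (ex i j l (2 ^ s - 1) (2 ^ (s + 1) - 1) (3 * 2 ^ s - 1)).update l (2 ^ (s + 1) - 1)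
      = (ex i l j (2 ^ s - 1) (2 ^ (s + 1) - 1) (3 * 2 ^ s - 1)).update j (2 ^ (s + 1) - 1) := by
      ext t
      simp only [Finsupp.update_apply, ex_apply hij hil hjl, ex_apply hil hij hjl.symm]
      grind
    rw [hu, add_add_add_comm, CharTwo.add_self_eq_zero, add_zero]

/-- index type -/
abbrev Tr := {t : Fin 4 × Fin 4 × Fin 4 //
  t.1 ≠ t.2.1 ∧ t.1 ≠ t.2.2 ∧ t.2.1 ≠ t.2.2 ∧ t.2.1 < t.2.2}

lemma sum_Tr (F : Fin 4 → Fin 4 → Fin 4 → P4) :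
    (∑ i : Fin 4, ∑ j : Fin 4, ∑ l : Fin 4,
      if i ≠ j ∧ i ≠ l ∧ j ≠ l ∧ j < l then F i j l else 0) =
    ∑ t : Tr, F t.1.1 t.1.2.1 t.1.2.2 := by
  rw [← Finset.sum_subtype (Finset.univ.filter fun t : Fin 4 × Fin 4 × Fin 4 =>
    t.1 ≠ t.2.1 ∧ t.1 ≠ t.2.2 ∧ t.2.1 ≠ t.2.2 ∧ t.2.1 < t.2.2) (by simp)
    (fun t => F t.1 t.2.1 t.2.2), Finset.sum_filter, Fintype.sum_prod_type]
  simp_rw [Fintype.sum_prod_type]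

lemma exists_perm : ∀ i j l : Fin 4, i ≠ j → i ≠ l → j ≠ l →
    ∃ σ : Equiv.Perm (Fin 4), σ 1 = i ∧ σ 2 = j ∧ σ 3 = l := by
  decide

lemma mm_homog (i j l : Fin 4) (p q r : ℕ) :
    (X i ^ p * X j ^ q * X l ^ r : P4).IsHomogeneous (p + q + r) :=
  ((isHom_X_pow i p).mul (isHom_X_pow j q)).mul (isHom_X_pow l r)

lemma part1 (s n : ℕ) (hs : 1 ≤ s) (hn : n = 6 * 2 ^ s - 3) :
    (permSpan n {X 1 ^ (2 ^ s - 1) * X 2 ^ (2 ^ s - 1) * X 3 ^ (2 ^ (s + 2) - 1)} =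
        Submodule.span kk (Qmk n '' A1set s) ∧
      permSpan n {X 1 ^ (2 ^ s - 1) * X 2 ^ (2 ^ s - 1) * X 3 ^ (2 ^ (s + 2) - 1)} ⊓
          QInv n permSet =
        Submodule.span kk {Qmk n (A1sum s)} ∧
      Qmk n (A1sum s) ≠ 0) := by
  have hp : 2 ≤ 2 ^ s := by simpa using Nat.pow_le_pow_right (n := 2) (by norm_num) hs
  have hA : 2 ^ (s + 2) = 4 * 2 ^ s := by ring
  have hdeg : 2 ^ (s + 2) - 1 + (2 ^ s - 1) + (2 ^ s - 1) = n := by omega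
  have hv0 : (X 1 ^ (2 ^ s - 1) * X 2 ^ (2 ^ s - 1) * X 3 ^ (2 ^ (s + 2) - 1) : P4) =
      X 3 ^ (2 ^ (s + 2) - 1) * X 1 ^ (2 ^ s - 1) * X 2 ^ (2 ^ s - 1) := by ring
  have key := main_T n (ι := Tr)
    (fun t => X t.1.1 ^ (2 ^ (s + 2) - 1) * X t.1.2.1 ^ (2 ^ s - 1) * X t.1.2.2 ^ (2 ^ s - 1))
    (fun t => cf (ex t.1.1 t.1.2.1 t.1.2.2 (2 ^ (s + 2) - 1) (2 ^ s - 1) (2 ^ s - 1)))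
    (by
      intro t
      have := mm_homog t.1.1 t.1.2.1 t.1.2.2 (2 ^ (s + 2) - 1) (2 ^ s - 1) (2 ^ s - 1)
      rwa [hdeg] at this)
    (by
      rintro ⟨⟨i, j, l⟩, h1, h2, h3, h4⟩
      refine compat_spike (by rw [ex_degree, hdeg]) fun t => ?_
      rw [ex_apply h1 h2 h3]
      split_ifs
      · exact ⟨s + 2, rfl⟩
      · exact ⟨s, rfl⟩
      · exact ⟨s, rfl⟩
      · exact ⟨0, rfl⟩)
    (by
      rintro ⟨⟨i, j, l⟩, h1, h2, h3, h4⟩ ⟨⟨i', j', l'⟩, h1', h2', h3', h4'⟩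
      simp only at h1 h2 h3 h4 h1' h2' h3' h4'
      simp only [mm_eq, cf_mono]
      congr 1
      simp only [Subtype.mk.injEq, Prod.mk.injEq, eq_iff_iff]
      constructor
      · intro h
        have ha := fun t => DFunLike.congr_fun h t
        simp only [ex_apply h1 h2 h3, ex_apply h1' h2' h3'] at ha
        have a1 := ha i
        have a2 := ha j
        have a3 := ha l
        have n1 : 2 ^ (s + 2) - 1 ≠ 2 ^ s - 1 := by omega
        have n2 : 2 ^ (s + 2) - 1 ≠ 0 := by omega
        have n3 : 2 ^ s - 1 ≠ 0 := by omega
        clear ha h hv0 hdeg hA hp hn hs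
        generalize 2 ^ (s + 2) - 1 = p at *
        generalize 2 ^ s - 1 = q at *
        grind
      · rintro ⟨rfl, rfl, rfl⟩
        rfl)
    (by
      rintro σ ⟨⟨i, j, l⟩, h1, h2, h3, h4⟩
      simp only at h1 h2 h3 h4
      have hne : ∀ {a b}, a ≠ b → σ a ≠ σ b := fun h => σ.injective.ne h
      rcases lt_or_gt_of_ne (hne h3) with h | h
      · exact ⟨⟨⟨σ i, σ j, σ l⟩, hne h1, hne h2, hne h3, h⟩, by simp⟩
      · refine ⟨⟨⟨σ i, σ l, σ j⟩, hne h2, hne h1, (hne h3).symm, h⟩, ?_⟩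
        simp only [map_mul, map_pow, rename_X]
        congr 1
        ring)
    ⟨⟨3, 1, 2⟩, by decide⟩
    (by
      rintro ⟨⟨i, j, l⟩, h1, h2, h3, h4⟩
      obtain ⟨σ, g1, g2, g3⟩ := exists_perm j l i h3 h1.symm h2.symm
      exact ⟨σ, by simp [g1, g2, g3]⟩)
  have hr : A1set s = Set.range (fun t : Tr => (X t.1.1 ^ (2 ^ (s + 2) - 1) *
      X t.1.2.1 ^ (2 ^ s - 1) * X t.1.2.2 ^ (2 ^ s - 1) : P4)) := by
    ext f
    constructor
    · rintro ⟨i, j, l, h1, h2, h3, rfl⟩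
      rcases lt_or_gt_of_ne h3 with h | h
      · exact ⟨⟨⟨i, j, l⟩, h1, h2, h3, h⟩, rfl⟩
      · refine ⟨⟨⟨i, l, j⟩, h2, h1, h3.symm, h⟩, ?_⟩
        ring
    · rintro ⟨⟨⟨i, j, l⟩, h1, h2, h3, h4⟩, rfl⟩
      exact ⟨i, j, l, h1, h2, h3, rfl⟩
  have hsum := sum_Tr fun i j l =>
    X i ^ (2 ^ (s + 2) - 1) * X j ^ (2 ^ s - 1) * X l ^ (2 ^ s - 1)
  rw [hv0, hr, A1sum, hsum]
  exact key

lemma part2 (s n : ℕ) (hs : 1 ≤ s) (hn : n = 6 * 2 ^ s - 3) :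
    (permSpan n {X 1 ^ (2 ^ s - 1) * X 2 ^ (2 ^ (s + 1) - 1) * X 3 ^ (3 * 2 ^ s - 1)} =
        Submodule.span kk (Qmk n '' A2set s) ∧
      permSpan n {X 1 ^ (2 ^ s - 1) * X 2 ^ (2 ^ (s + 1) - 1) * X 3 ^ (3 * 2 ^ s - 1)} ⊓
          QInv n permSet =
        Submodule.span kk {Qmk n (A2sum s)}) := by
  have hp : 2 ≤ 2 ^ s := by simpa using Nat.pow_le_pow_right (n := 2) (by norm_num) hs
  have hA : 2 ^ (s + 1) = 2 * 2 ^ s := by ring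
  have hdeg : 2 ^ s - 1 + (2 ^ (s + 1) - 1) + (3 * 2 ^ s - 1) = n := by omega
  have exinj : ∀ {i j l i' j' l' : Fin 4}, i ≠ j → i ≠ l → j ≠ l → i' ≠ j' → i' ≠ l' → j' ≠ l' →
      (ex i j l (2 ^ s - 1) (2 ^ (s + 1) - 1) (3 * 2 ^ s - 1) =
       ex i' j' l' (2 ^ s - 1) (2 ^ (s + 1) - 1) (3 * 2 ^ s - 1) ↔ i = i' ∧ j = j' ∧ l = l') := by
    intro i j l i' j' l' h1 h2 h3 h1' h2' h3'
    constructor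
    · intro h
      have ha := fun t => DFunLike.congr_fun h t
      simp only [ex_apply h1 h2 h3, ex_apply h1' h2' h3'] at ha
      have a1 := ha i
      have a2 := ha j
      have a3 := ha l
      have n1 : 2 ^ s - 1 ≠ 2 ^ (s + 1) - 1 := by omega
      have n2 : 2 ^ s - 1 ≠ 3 * 2 ^ s - 1 := by omega
      have n3 : 2 ^ (s + 1) - 1 ≠ 3 * 2 ^ s - 1 := by omega
      have n4 : 2 ^ s - 1 ≠ 0 := by omega
      have n5 : 2 ^ (s + 1) - 1 ≠ 0 := by omega
      have n6 : 3 * 2 ^ s - 1 ≠ 0 := by omega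
      clear ha h hdeg hA hp hn hs
      generalize 2 ^ (s + 1) - 1 = q at *
      generalize 3 * 2 ^ s - 1 = r at *
      generalize 2 ^ s - 1 = p at *
      grind
    · rintro ⟨rfl, rfl, rfl⟩
      rfl
  have key := main_T n (ι := Tr)
    (fun t => X t.1.1 ^ (2 ^ s - 1) * X t.1.2.1 ^ (2 ^ (s + 1) - 1) * X t.1.2.2 ^ (3 * 2 ^ s - 1))
    (fun t => cf (ex t.1.1 t.1.2.1 t.1.2.2 (2 ^ s - 1) (2 ^ (s + 1) - 1) (3 * 2 ^ s - 1)) +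
      cf (ex t.1.1 t.1.2.2 t.1.2.1 (2 ^ s - 1) (2 ^ (s + 1) - 1) (3 * 2 ^ s - 1)))
    (by
      intro t
      have := mm_homog t.1.1 t.1.2.1 t.1.2.2 (2 ^ s - 1) (2 ^ (s + 1) - 1) (3 * 2 ^ s - 1)
      rwa [hdeg] at this)
    (by
      rintro ⟨⟨i, j, l⟩, h1, h2, h3, h4⟩
      exact compat_A2 hn h1 h2 h3)
    (by
      rintro ⟨⟨i, j, l⟩, h1, h2, h3, h4⟩ ⟨⟨i', j', l'⟩, h1', h2', h3', h4'⟩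
      simp only at h1 h2 h3 h4 h1' h2' h3' h4'
      simp only [mm_eq, AddMonoidHom.add_apply, cf_mono, exinj h1' h2' h3' h1 h2 h3,
        exinj h1' h2' h3' h2 h1 h3.symm, Subtype.mk.injEq, Prod.mk.injEq]
      have hno : ¬ (i' = i ∧ j' = l ∧ l' = j) := by
        rintro ⟨_, rfl, rfl⟩
        exact lt_asymm h4 h4'
      rw [if_neg hno, add_zero]
      congr 1
      simp only [eq_comm])
    (by
      rintro σ ⟨⟨i, j, l⟩, h1, h2, h3, h4⟩
      simp only at h1 h2 h3 h4
      have hne : ∀ {a b}, a ≠ b → σ a ≠ σ b := fun h => σ.injective.ne h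
      rcases lt_or_gt_of_ne (hne h3) with h | h
      · exact ⟨⟨⟨σ i, σ j, σ l⟩, hne h1, hne h2, hne h3, h⟩, by simp⟩
      · refine ⟨⟨⟨σ i, σ l, σ j⟩, hne h2, hne h1, (hne h3).symm, h⟩, ?_⟩
        simp only [map_mul, map_pow, rename_X]
        rw [hn]
        exact rel_hit _ _ _ s)
    ⟨⟨1, 2, 3⟩, by decide⟩
    (by
      rintro ⟨⟨i, j, l⟩, h1, h2, h3, h4⟩
      obtain ⟨σ, g1, g2, g3⟩ := exists_perm i j l h1 h2 h3
      exact ⟨σ, by simp [g1, g2, g3]⟩)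
  have hr : A2set s = Set.range (fun t : Tr => (X t.1.1 ^ (2 ^ s - 1) *
      X t.1.2.1 ^ (2 ^ (s + 1) - 1) * X t.1.2.2 ^ (3 * 2 ^ s - 1) : P4)) := by
    ext f
    constructor
    · rintro ⟨i, j, l, h1, h2, h3, h, rfl⟩
      exact ⟨⟨⟨i, j, l⟩, h1, h2, h3, h⟩, rfl⟩
    · rintro ⟨⟨⟨i, j, l⟩, h1, h2, h3, h4⟩, rfl⟩
      exact ⟨i, j, l, h1, h2, h3, h4, rfl⟩
  have hsum := sum_Tr fun i j l =>
    X i ^ (2 ^ s - 1) * X j ^ (2 ^ (s + 1) - 1) * X l ^ (3 * 2 ^ s - 1)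
  rw [hr, A2sum, hsum]
  exact ⟨key.1, key.2.1⟩

lemma part3 (s n : ℕ) (hn : n = 6 * 2 ^ s - 3) :
    (permSpan n
          {X 1 ^ (2 ^ (s + 1) - 1) * X 2 ^ (2 ^ (s + 1) - 1) * X 3 ^ (2 ^ (s + 1) - 1)} =
        Submodule.span kk (Qmk n '' A3set s) ∧
      permSpan n
            {X 1 ^ (2 ^ (s + 1) - 1) * X 2 ^ (2 ^ (s + 1) - 1) * X 3 ^ (2 ^ (s + 1) - 1)} ⊓
          QInv n permSet =
        Submodule.span kk {Qmk n (A3sum s)}) := by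
  have hp := Nat.one_le_two_pow (n := s)
  have hA : 2 ^ (s + 1) = 2 * 2 ^ s := by ring
  have hb : 2 ^ (s + 1) - 1 ≠ 0 := by omega
  have hsp : ∀ t k : Fin 4, ∃ r, (if t = k then 0 else 2 ^ (s + 1) - 1) = 2 ^ r - 1 := by
    intro t k
    split_ifs
    · exact ⟨0, rfl⟩
    · exact ⟨s + 1, rfl⟩
  have hdeg : 3 * (2 ^ (s + 1) - 1) = n := by omega
  unfold A3set A3sum
  generalize 2 ^ (s + 1) - 1 = b at *
  let E : Fin 4 → Fin 4 →₀ ℕ := fun k => Finsupp.equivFunOnFinite.symm fun t => if t = k then 0 else b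
  let v : Fin 4 → P4 := fun k => ∏ t, X t ^ (if t = k then 0 else b)
  have hE : ∀ k, (E k).degree = n := by
    intro k
    rw [deg_eq, ← hdeg]
    fin_cases k <;> simp [E] <;> ring
  have hvE : ∀ k, v k = monomial (E k) 1 := by
    intro k
    rw [monomial_eq, Finsupp.prod_fintype _ _ (by simp)]
    simp [v, E]
  have hren : ∀ (σ : Equiv.Perm (Fin 4)) k, rename σ (v k) = v (σ k) := by
    intro σ k
    simp only [v, map_prod, map_pow, rename_X]
    rw [← Equiv.prod_comp σ (fun t => (X t ^ (if t = σ k then 0 else b) : P4))]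
    simp
  have key := main_T n v (fun k => cf (E k))
    (by intro k; rw [hvE, ← hE k]; exact isHom_mono _)
    (by intro k; exact compat_spike (hE k) fun t => hsp t k)
    (by
      intro i j
      rw [hvE, cf_mono]
      congr 1
      rw [eq_iff_iff]
      constructor
      · intro h
        have := DFunLike.congr_fun h i
        simp [E] at this
        by_contra hne
        exact hb (this hne)
      · rintro rfl; rfl)
    (fun σ i => ⟨σ i, by rw [hren]⟩) 0
    (fun j => ⟨Equiv.swap 0 j, by rw [hren, Equiv.swap_apply_left]⟩)
  have v0 : v 0 = X 1 ^ b * X 2 ^ b * X 3 ^ b := by simp [v, Fin.prod_univ_four]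
  have v1 : v 1 = X 0 ^ b * X 2 ^ b * X 3 ^ b := by simp [v, Fin.prod_univ_four]
  have v2 : v 2 = X 0 ^ b * X 1 ^ b * X 3 ^ b := by simp [v, Fin.prod_univ_four]
  have v3 : v 3 = X 0 ^ b * X 1 ^ b * X 2 ^ b := by simp [v, Fin.prod_univ_four]
  have hr : {f : P4 | ∃ i j l : Fin 4, i < j ∧ j < l ∧ f = X i ^ b * X j ^ b * X l ^ b} =
      Set.range v := by
    ext f
    constructor
    · rintro ⟨i, j, l, h1, h2, rfl⟩
      have : (i = 1 ∧ j = 2 ∧ l = 3) ∨ (i = 0 ∧ j = 2 ∧ l = 3) ∨ (i = 0 ∧ j = 1 ∧ l = 3) ∨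
        (i = 0 ∧ j = 1 ∧ l = 2) := by omega
      rcases this with ⟨rfl, rfl, rfl⟩ | ⟨rfl, rfl, rfl⟩ | ⟨rfl, rfl, rfl⟩ | ⟨rfl, rfl, rfl⟩
      exacts [⟨0, v0⟩, ⟨1, v1⟩, ⟨2, v2⟩, ⟨3, v3⟩]
    · rintro ⟨k, rfl⟩
      have : k = 0 ∨ k = 1 ∨ k = 2 ∨ k = 3 := by omega
      rcases this with rfl | rfl | rfl | rfl
      · exact ⟨1, 2, 3, by decide, by decide, v0⟩
      · exact ⟨0, 2, 3, by decide, by decide, v1⟩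
      · exact ⟨0, 1, 3, by decide, by decide, v2⟩
      · exact ⟨0, 1, 2, by decide, by decide, v3⟩
  have hsum : (∑ i : Fin 4, ∑ j : Fin 4, ∑ l : Fin 4,
      if i < j ∧ j < l then (X i ^ b * X j ^ b * X l ^ b : P4) else 0) = ∑ k, v k := by
    rw [Fin.sum_univ_four (f := v), v0, v1, v2, v3]
    simp [Fin.sum_univ_four]
    ring
  rw [hr, hsum, ← v0]
  exact ⟨key.1, key.2.1⟩

/-- In degree `n = 6·2^s - 3` (`s ≥ 1`):
(i) the `Σ_4`-submodule of `Q_n` generated by `[x₂^{2^s-1}x₃^{2^s-1}x₄^{2^{s+2}-1}]` is the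
span of the classes of `A1`, and its `Σ_4`-invariants are one-dimensional, spanned by the
class of the sum of `A1`;
(ii) the `Σ_4`-submodule generated by `[x₂^{2^s-1}x₃^{2^{s+1}-1}x₄^{3·2^s-1}]` is the span of
the classes of `A2`, and its `Σ_4`-invariants are spanned by the class of the sum of `A2`;
(iii) the `Σ_4`-submodule generated by `[x₂^{2^{s+1}-1}x₃^{2^{s+1}-1}x₄^{2^{s+1}-1}]` is the
span of the classes of `A3`, and its `Σ_4`-invariants are spanned by the class of the sum
of `A3`. -/
theorem statement_9 (s n : ℕ) (hs : 1 ≤ s) (hn : n = 6 * 2 ^ s - 3) :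
    (permSpan n {X 1 ^ (2 ^ s - 1) * X 2 ^ (2 ^ s - 1) * X 3 ^ (2 ^ (s + 2) - 1)} =
        Submodule.span kk (Qmk n '' A1set s) ∧
      permSpan n {X 1 ^ (2 ^ s - 1) * X 2 ^ (2 ^ s - 1) * X 3 ^ (2 ^ (s + 2) - 1)} ⊓
          QInv n permSet =
        Submodule.span kk {Qmk n (A1sum s)} ∧
      Qmk n (A1sum s) ≠ 0) ∧
    (permSpan n {X 1 ^ (2 ^ s - 1) * X 2 ^ (2 ^ (s + 1) - 1) * X 3 ^ (3 * 2 ^ s - 1)} =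
        Submodule.span kk (Qmk n '' A2set s) ∧
      permSpan n {X 1 ^ (2 ^ s - 1) * X 2 ^ (2 ^ (s + 1) - 1) * X 3 ^ (3 * 2 ^ s - 1)} ⊓
          QInv n permSet =
        Submodule.span kk {Qmk n (A2sum s)}) ∧
    (permSpan n
          {X 1 ^ (2 ^ (s + 1) - 1) * X 2 ^ (2 ^ (s + 1) - 1) * X 3 ^ (2 ^ (s + 1) - 1)} =
        Submodule.span kk (Qmk n '' A3set s) ∧
      permSpan n
            {X 1 ^ (2 ^ (s + 1) - 1) * X 2 ^ (2 ^ (s + 1) - 1) * X 3 ^ (2 ^ (s + 1) - 1)} ⊓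
          QInv n permSet =
        Submodule.span kk {Qmk n (A3sum s)}) := by
  exact ⟨part1 s n hs hn, part2 s n hs hn, part3 s n hn⟩

end
end

section
/- The subspace of Σ_4-invariants of Q_9 is spanned by the classes of the four polynomials: q_1 = the sum of the 12 monomials obtained by assigning the exponents 7, 1, 1 to three distinct variables among x_1,...,x_4; q_2 = the sum of the 12 monomials obtained by assigning the exponents 1, 3, 5 to three distinct variables such that the variable carrying exponent 3 has smaller index than the variable carrying exponent 5; q_3 = the sum of the 4 monomials x_i^3x_j^3x_k^3 with 1 ≤ i < j < k ≤ 4; and q_4 = x_1x_2x_3x_4^6 + x_1x_2x_3^6x_4 + x_1x_2^6x_3x_4 + x_1^3x_2x_3x_4^4 + x_1^3x_2x_3^4x_4 + x_1^3x_2^4x_3x_4. -/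
/-!
Common setup: the polynomial algebra `P_4 = F_2[x_1,x_2,x_3,x_4]` (variables `X 0, ..., X 3`),
the Steenrod action, hit polynomials, the cohit spaces `Q_n`, and the (induced) actions of
`GL_4(F_2)` and of the symmetric group `Σ_4` on `Q_n`.
-/

open MvPolynomial

noncomputable section

/-- `q₁`: the sum of the 12 monomials with exponents `7, 1, 1` on three distinct
variables. -/
def q11_1 : P4 :=
  ∑ i : Fin 4, ∑ j : Fin 4, ∑ l : Fin 4,
    if i ≠ j ∧ i ≠ l ∧ j ≠ l ∧ j < l then X i ^ 7 * X j * X l else 0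

/-- `q₂`: the sum of the 12 monomials with exponents `1, 3, 5` on three distinct variables,
the variable carrying `3` having smaller index than the variable carrying `5`. -/
def q11_2 : P4 :=
  ∑ i : Fin 4, ∑ j : Fin 4, ∑ l : Fin 4,
    if i ≠ j ∧ i ≠ l ∧ j ≠ l ∧ j < l then X i * X j ^ 3 * X l ^ 5 else 0

/-- `q₃`: the sum of the 4 monomials `x_i³x_j³x_k³`, `i < j < k`. -/
def q11_3 : P4 :=
  ∑ i : Fin 4, ∑ j : Fin 4, ∑ l : Fin 4,
    if i < j ∧ j < l then X i ^ 3 * X j ^ 3 * X l ^ 3 else 0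

/-- `q₄` (with `x_i = X (i-1)`). -/
def q11_4 : P4 :=
  X 0 * X 1 * X 2 * X 3 ^ 6 + X 0 * X 1 * X 2 ^ 6 * X 3 + X 0 * X 1 ^ 6 * X 2 * X 3 +
    X 0 ^ 3 * X 1 * X 2 * X 3 ^ 4 + X 0 ^ 3 * X 1 * X 2 ^ 4 * X 3 +
    X 0 ^ 3 * X 1 ^ 4 * X 2 * X 3


/-! ### Computational model -/

abbrev Exp : Type := ℕ × ℕ × ℕ × ℕ

def dec (n : ℕ) : Exp := (n / 1000, n / 100 % 10, n / 10 % 10, n % 10)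

def encE (e : Exp) : ℕ := 1 <<< (e.1 + 10 * e.2.1 + 100 * e.2.2.1)

def tabB : List ℕ :=
  [117, 135, 171, 315, 351, 711, 1017, 1035, 1071, 1107, 1116, 1125, 1134, 1161, 1170, 1215, 1251,
  1305, 1314, 1341, 1350, 1611, 1701, 1710, 3015, 3051, 3105, 3114, 3141, 3150, 3411, 3501, 3510,
  7011, 7101, 7110, 333, 1233, 1323, 1332, 3033, 3123, 3132, 3303, 3312, 3330]

def bigT : ℕ :=
  6180852236837204307264481772729230427934328367771170793207635356785355744884145497176074401032447016448616213546158930786176847783462590807169145719552834186004870229172760305774677742419207055149361997449352770188243345781142855817318147704506730486013947640760354334779669055605893285485669659752749242431504998762222800371365143327779359626613955620586267151668318576567710271187742392363337932797510141802908358191878912854744029699037844656863385330409422660132634864866321351829732081902636371008329076364861964069727360982235412468876979013292870092807158553300697103398676284703422839111001592713421926680415892578828945533737116982106527832690220909698655453662406471486225940793717318395028711966537168470323191646218751371332421779911796473281825422181514883330759304690196259916978691443214714045161393225355104035824069972097520974921030395198536247657961094599622036620770053692531069554751184588866734168442477671143243041098599365197356789539277399081302002580934762317009268922961703729342774598559675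6395751741861461814340842655292607540682553474543346631871797817859928069436510254926095738777587830282592644462143950792443717179762977023723132989171720429054595701468509699435937274184355359009925280970543483195743957297724878832769628241378798031459610354280617831477317434436315410349481235894915729455459356935426126637405761086743543121739021853980968604522790715849127427162840393656987028819619012002522492112202292367610185690058471201172772148769513198905589860849443911333270430513671767453693461796090665956288638742680498069269474821164742752622018551408789019393615986745017998683564978386319582488358652986604721275274780775972749046945907953178080291552831111672173945403059269685559542809861415049733616137580643608559358246748592664866972409182080336871461160842266484621139112272576456204591561752510651128316677561190301778984106478962258228564072547894043227963548066285997381717967289456642514906665582738171471958292183180807258196574373479265483784777948268886567491542388960225524036999990391961204957579607723383836810525122184426809755854545173225512215144561923839218229991279449173330225212633990279493502117697503610385320616705842683823106020640000382783620622797841051005022715712213749679341722931298017025995160613415803093957671361387822940280801144385472621442283264334181787265949140381516963658450858381628715553517266554967968984417151769394384274177385857813008571846059831387143162996712833662123370484217040225502945269094532942782672083060133527871259232618299724298344279043996496596625275539207164108255636202984491380599090703022872416576913395229430061132025244810242624921583893790399502958220658317845144238000560928503919082014544067399947678810818995049091762026300444652109040121190697189686372246267755165530244223174798728217916015258243442124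022173660796342039484799956604704022212273193821392232170163544289867464704

def tabS : List (ℕ × ℕ) :=
  tabB.zipIdx.map fun p => (p.2, encE (dec p.1))

def tabL : List (ℕ × ℕ) :=
  [(0, 60142142309), (1, 7097942170), (36, 45148696215552), (10, 1478501376)]

def tabR0 : List (ℕ × ℕ) :=
  [(25, 7097942144), (28, 890880), (29, 1179776), (30, 1477285888), (33, 60142142272), (35,
  12600128), (40, 45079976738816), (42, 962072674304)]

def tabR1 : List (ℕ × ℕ) :=
  [(3, 7097942168), (5, 60142142304), (17, 128), (18, 6144), (19, 98304), (21, 1478492160), (22,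
  320), (23, 16896), (30, 403544064), (31, 7047610496), (32, 605159552), (34, 51552207680), (38,
  137438953472), (43, 43980465111040), (44, 7559142440960)]

def tabR2 : List (ℕ × ℕ) :=
  [(2, 60142142308), (4, 7097942160), (8, 64), (12, 2048), (13, 1478500352), (14, 512), (16,
  32768), (19, 268288), (20, 131200), (23, 4194624), (25, 16777216), (28, 134217728), (29,
  67108864), (30, 25151328753664), (32, 4900126848), (35, 34372338496), (39, 412316860416), (42,
  2199023255552), (45, 35184372088832)]

def cert : List (List (List (List ℕ))) :=
  [[[[7], [16], [17, 16], [35, 25], [25], [34], [53, 34], [71, 61], [61], [70]], [[106], [], [116,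
  125, 115], [], [124], [134, 143, 124, 133], [152, 161, 151], [], [160]], [[107, 106], [125,
  115], [116, 115], [134, 124], [143, 124], [161, 151], [152, 151], [170, 160]], [[305, 205], [],
  [314, 214], [], [134, 161, 332, 124, 151, 232], [], [350, 250]], [[205], [214], [314, 323, 214],
  [134, 161, 124, 151, 232], [134, 161, 332, 341, 124, 151, 232], [250]], [[304], [323, 214, 313],
  [134, 161, 314, 332, 124, 151, 214, 232, 322], [134, 161, 341, 124, 151, 232, 331], [340]],
  [[503, 304], [134, 161, 314, 332, 512, 124, 151, 214, 232, 322], [134, 161, 314, 332, 521, 124,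
  151, 214, 232, 322], [530, 340]], [[701, 601], [], [710, 610]], [[601], [610]], [[700]]],
  [[[1006], [], [1016, 1025, 1015], [], [1024], [1034, 1043, 1024, 1033], [1052, 1061, 1051], [],
  [1060]], [[], [], [], [], [1214, 1223, 1114, 1123], [1232, 1241, 1132, 1141], [], []], [[1106,
  1205, 1105], [], [1124, 1214, 1114], [], [1142, 1241, 1141], [], [1160, 1250, 1150]], [[], [],
  [], [], [], []], [[1204], [1124, 1223, 1114, 1213], [1124, 1142, 1214, 1241, 1114, 1141, 1222],
  [1142, 1232, 1141, 1231], [1240]], [[1304, 1403, 1204, 1303], [1124, 1142, 1214, 1241, 1322,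
  1412, 1114, 1141, 1222, 1312], [1124, 1142, 1214, 1241, 1322, 1421, 1114, 1141, 1222, 1321],
  [1340, 1430, 1240, 1330]], [[1502, 1601, 1501], [], [1520, 1610, 1510]], [[], []], [[1600]]],
  [[[1007, 1006], [1025, 1015], [1016, 1015], [1034, 1024], [1043, 1024], [1061, 1051], [1052,
  1051], [1070, 1060]], [[1205, 1105], [1115], [1214, 1114], [1133, 1214, 1223, 1114, 1123],
  [1241, 1141], [1151, 1232, 1241, 1132, 1141], [1250, 1150]], [[1106, 1105], [1124, 1114], [1124,
  1214, 1223, 1114], [1142, 1232, 1241, 1141], [1142, 1141], [1160, 1150]], [[1304, 1204], [1124,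
  1223, 1313, 1114, 1213], [1124, 1142, 1214, 1241, 1322, 1114, 1141, 1222], [1142, 1232, 1331,
  1141, 1231], [1340, 1240]], [[1403, 1204], [1124, 1142, 1214, 1241, 1412, 1114, 1141, 1222],
  [1124, 1142, 1214, 1241, 1421, 1114, 1141, 1222], [1430, 1240]], [[1601, 1501], [1412, 1421,
  1511, 1312, 1321], [1610, 1510]], [[1502, 1501], [1520, 1510]], [[1700, 1600]]], [[[3005, 2005],
  [], [3014, 2014], [], [1034, 1061, 3032, 1024, 1051, 2032], [], [3050, 2050]], [[], [], [], [],
  [], []], [[3104, 2104], [1115, 1223, 3113, 1114, 2113], [1214, 1241, 3122, 1114, 1141, 2122],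
  [1151, 1241, 3131, 1132, 2131], [3140, 2140]], [[], [], [1124, 1142, 1214, 1241, 1322, 1511,
  3311, 1114, 1141, 1222, 1312, 1321, 2311], []], [[1304, 1601, 3302, 1204, 1501, 2302], [],
  [1340, 1610, 3320, 1240, 1510, 2320]], [[], []], [[3500, 2500]]], [[[2005], [2014], [3014, 3023,
  2014], [1034, 1061, 1024, 1051, 2032], [1034, 1061, 3032, 3041, 1024, 1051, 2032], [2050]],
  [[2104], [1115, 1223, 1114, 2113], [1214, 1241, 1114, 1141, 2122], [1151, 1241, 1132, 2131],
  [2140]], [[3104, 3203, 2104], [1214, 1241, 3122, 3212, 1114, 1141, 2122], [1214, 1241, 3122,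
  3221, 1114, 1141, 2122], [3140, 3230, 2140]], [[1304, 1601, 1204, 1501, 2302], [1124, 1142,
  1214, 1241, 1322, 1511, 1114, 1141, 1222, 1312, 1321, 2311], [1340, 1610, 1240, 1510, 2320]],
  [[1304, 1601, 3302, 3401, 1204, 1501, 2302], [1340, 1610, 3320, 3410, 1240, 1510, 2320]],
  [[2500]]], [[[3004], [3023, 2014, 3013], [1034, 1061, 3014, 3032, 1024, 1051, 2014, 2032, 3022],
  [1034, 1061, 3041, 1024, 1051, 2032, 3031], [3040]], [[3203, 2104, 3103], [1214, 1241, 3212,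
  1114, 1141, 2122, 3112], [1214, 1241, 3221, 1114, 1141, 2122, 3121], [3230, 2140, 3130]],
  [[1304, 1601, 3104, 3302, 1204, 1501, 2104, 2302, 3202], [1214, 1241, 3122, 3212, 3221, 1114,
  1141, 2122, 3211], [1340, 1610, 3140, 3320, 1240, 1510, 2140, 2320, 3220]], [[1304, 1601, 3401,
  1204, 1501, 2302, 3301], [1340, 1610, 3410, 1240, 1510, 2320, 3310]], [[3400]]], [[[5003, 3004],
  [1034, 1061, 3014, 3032, 5012, 1024, 1051, 2014, 2032, 3022], [1034, 1061, 3014, 3032, 5021,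
  1024, 1051, 2014, 2032, 3022], [5030, 3040]], [[1304, 1601, 3104, 3302, 5102, 1204, 1501, 2104,
  2302, 3202], [1214, 1241, 3122, 5111, 1114, 1141, 2122, 3112, 3121, 3211], [1340, 1610, 3140,
  3320, 5120, 1240, 1510, 2140, 2320, 3220]], [[1304, 1601, 3104, 3302, 5201, 1204, 1501, 2104,
  2302, 3202], [1340, 1610, 3140, 3320, 5210, 1240, 1510, 2140, 2320, 3220]], [[5300, 3400]]],
  [[[7001, 6001], [], [7010, 6010]], [[], []], [[7100, 6100]]], [[[6001], [6010]], [[6100]]],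
  [[[7000]]]]

def ql1 : List Exp :=
  [(7, 1, 1, 0), (7, 1, 0, 1), (7, 0, 1, 1), (1, 7, 1, 0), (1, 7, 0, 1), (0, 7, 1, 1), (1, 1, 7,
  0), (1, 0, 7, 1), (0, 1, 7, 1), (1, 1, 0, 7), (1, 0, 1, 7), (0, 1, 1, 7)]

def ql2 : List Exp :=
  [(1, 3, 5, 0), (1, 3, 0, 5), (1, 0, 3, 5), (3, 1, 5, 0), (3, 1, 0, 5), (0, 1, 3, 5), (3, 5, 1,
  0), (3, 0, 1, 5), (0, 3, 1, 5), (3, 5, 0, 1), (3, 0, 5, 1), (0, 3, 5, 1)]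

def ql3 : List Exp :=
  [(3, 3, 3, 0), (3, 3, 0, 3), (3, 0, 3, 3), (0, 3, 3, 3)]

def ql4 : List Exp :=
  [(1, 1, 1, 6), (1, 1, 6, 1), (1, 6, 1, 1), (3, 1, 1, 4), (3, 1, 4, 1), (3, 4, 1, 1)]

def tabT (e : Exp) : ℕ :=
  (bigT >>> (46 * ((e.1 + e.2.1 + e.2.2.1) * (e.1 + e.2.1 + e.2.2.1 + 1) *
    (e.1 + e.2.1 + e.2.2.1 + 2) / 6 + (e.1 + e.2.1) * (e.1 + e.2.1 + 1) / 2 + e.1))) % 2 ^ 46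

def xsum (F : Exp → ℕ) (l : List Exp) : ℕ := l.foldr (fun e acc => F e ^^^ acc) 0

def lin (R : List (ℕ × ℕ)) (n : ℕ) : ℕ :=
  R.foldr (fun p acc => (bif n.testBit p.1 then p.2 else 0) ^^^ acc) 0

def pw (a : ℕ) : List ℕ :=
  ((List.range (a + 1)).filter fun i => Nat.choose a i % 2 == 1).map fun i => a + i

def sqAll (e : Exp) : List Exp :=
  (pw e.1).flatMap fun i => (pw e.2.1).flatMap fun j => (pw e.2.2.1).flatMap fun k =>
    (pw e.2.2.2).map fun l => (i, j, k, l)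

def edeg (e : Exp) : ℕ := e.1 + e.2.1 + e.2.2.1 + e.2.2.2

def sqList (e : Exp) : List Exp := (sqAll e).filter fun x => edeg x == 9

def one1 (s : Fin 4) (a : ℕ) (j : Fin 4) : ℕ := bif s == j then a else 0

def comp1 (s : Fin 4 → Fin 4) (e : Exp) (j : Fin 4) : ℕ :=
  one1 (s 0) e.1 j + one1 (s 1) e.2.1 j + one1 (s 2) e.2.2.1 j + one1 (s 3) e.2.2.2 j

def actE (s : Fin 4 → Fin 4) (e : Exp) : Exp :=
  (comp1 s e 0, comp1 s e 1, comp1 s e 2, comp1 s e 3)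

def allE (n : ℕ) (p : Exp → Bool) : Bool :=
  (List.range (n + 1)).all fun a => (List.range (n + 1 - a)).all fun b =>
    (List.range (n + 1 - a - b)).all fun c => p (a, b, c, n - a - b - c)

theorem allE_spec {n : ℕ} {p : Exp → Bool} (h : allE n p = true) (e : Exp) (he : edeg e = n) :
    p e = true := by
  obtain ⟨a, b, c, d⟩ := e
  simp only [edeg] at he
  simp only [allE, List.all_eq_true, List.mem_range] at h
  have := h a (by omega) b (by omega) c (by omega)
  have hd : n - a - b - c = d := by omega
  rwa [hd] at this

def certOf (e : Exp) : List ℕ := ((cert.getD e.1 []).getD e.2.1 []).getD e.2.2.1 []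

def checkA : Bool :=
  (List.range 9).all fun n => allE n fun e => xsum tabT (sqList e) == 0

def checkB : Bool :=
  allE 9 fun e =>
    ((certOf e).all fun g => Nat.blt (edeg (dec g)) 9) &&
    (encE e ^^^ lin tabS (tabT e)) ==
      xsum (fun e => e.1) ((certOf e).map fun g => (xsum encE (sqList (dec g)), 0, 0, 0))

def checkC (q : List Exp) : Bool :=
  [0, 1, 2, 3].all fun s0 => [0, 1, 2, 3].all fun s1 => [0, 1, 2, 3].all fun s2 =>
    [0, 1, 2, 3].all fun s3 =>
      (s0 == s1 || s0 == s2 || s0 == s3 || s1 == s2 || s1 == s3 || s2 == s3) ||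
        (xsum tabT (q.map (actE ![s0, s1, s2, s3])) == xsum tabT q)

def checkD : Bool :=
  allE 9 fun e => tabT e == (lin tabL (tabT e) ^^^
    (lin tabR0 (tabT (actE ![1, 0, 2, 3] e) ^^^ tabT e) ^^^
    (lin tabR1 (tabT (actE ![0, 2, 1, 3] e) ^^^ tabT e) ^^^
    lin tabR2 (tabT (actE ![0, 1, 3, 2] e) ^^^ tabT e))))

theorem checkA_ok : checkA = true := by decide +kernel
theorem checkB_ok : checkB = true := by decide +kernel
theorem checkC1_ok : checkC ql1 = true := by decide +kernel
theorem checkC2_ok : checkC ql2 = true := by decide +kernel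
theorem checkC3_ok : checkC ql3 = true := by decide +kernel
theorem checkC4_ok : checkC ql4 = true := by decide +kernel
theorem checkD_ok : checkD = true := by decide +kernel
theorem tabL_ok : tabL = [(0, xsum tabT ql1), (1, xsum tabT ql2), (36, xsum tabT ql3),
    (10, xsum tabT ql4)] := by decide +kernel

/-! ### Semantics -/

abbrev WW : Type := ℕ → kk

def bits (n : ℕ) : WW := fun j => if n.testBit j then 1 else 0

theorem bits_zero : bits 0 = 0 := by
  funext j; simp [bits]

theorem bits_xor (a b : ℕ) : bits (a ^^^ b) = bits a + bits b := by
  funext j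
  simp only [bits, Nat.testBit_xor, Pi.add_apply]
  cases a.testBit j <;> cases b.testBit j <;> simp <;> decide

def mono (e : Exp) : P4 := X 0 ^ e.1 * X 1 ^ e.2.1 * X 2 ^ e.2.2.1 * X 3 ^ e.2.2.2

def fs (e : Exp) : Fin 4 →₀ ℕ :=
  Finsupp.single 0 e.1 + Finsupp.single 1 e.2.1 + Finsupp.single 2 e.2.2.1 +
    Finsupp.single 3 e.2.2.2

theorem mono_eq (e : Exp) : mono e = monomial (fs e) 1 := by
  simp [mono, fs, X_pow_eq_monomial, monomial_mul]

theorem fs_of (v : Fin 4 →₀ ℕ) : fs (v 0, v 1, v 2, v 3) = v := by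
  ext i; fin_cases i <;> simp [fs]

theorem fs_apply (e : Exp) : (fs e 0, fs e 1, fs e 2, fs e 3) = e := by
  simp [fs]

theorem fs_degree (e : Exp) : (fs e).degree = edeg e := by
  simp [fs, edeg]

theorem mono_homog (e : Exp) : mono e ∈ homog (edeg e) := by
  rw [mono_eq, homog, mem_homogeneousSubmodule]
  exact isHomogeneous_monomial _ (fs_degree e)

theorem homog_le {n : ℕ} (K : Submodule kk P4) (h : ∀ e, edeg e = n → mono e ∈ K) :
    homog n ≤ K := by
  intro f hf
  rw [homog, mem_homogeneousSubmodule] at hf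
  rw [as_sum f]
  refine Submodule.sum_mem _ fun v hv => ?_
  have h1 : v.degree = n := by
    have := hf (mem_support_iff.1 hv)
    rw [← this, Finsupp.degree_eq_weight_one]; rfl
  have h2 : monomial v (coeff v f) = coeff v f • mono (v 0, v 1, v 2, v 3) := by
    rw [mono_eq, fs_of, smul_monomial]; simp
  rw [h2]
  refine K.smul_mem _ (h _ ?_)
  rw [← fs_degree, fs_of, h1]

def toPoly (l : List Exp) : P4 := (l.map mono).sum

def Lam (F : Exp → ℕ) : P4 →ₗ[kk] WW :=
  (basisMonomials (Fin 4) kk).constr kk fun v => bits (F (v 0, v 1, v 2, v 3))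

theorem Lam_mono (F : Exp → ℕ) (e : Exp) : Lam F (mono e) = bits (F e) := by
  have := (basisMonomials (Fin 4) kk).constr_basis kk
    (fun v => bits (F (v 0, v 1, v 2, v 3))) (fs e)
  rw [coe_basisMonomials] at this
  rw [mono_eq, Lam, this, fs_apply]

theorem Lam_toPoly (F : Exp → ℕ) (l : List Exp) : Lam F (toPoly l) = bits (xsum F l) := by
  induction l with
  | nil => simp [toPoly, xsum, bits_zero]
  | cons e l ih =>
    simp only [toPoly, List.map_cons, List.sum_cons, map_add, xsum, List.foldr_cons] at ih ⊢
    rw [ih, Lam_mono, bits_xor]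

def linW : List (ℕ × ℕ) → (WW →ₗ[kk] WW)
  | [] => 0
  | p :: R => (LinearMap.proj p.1 : WW →ₗ[kk] kk).smulRight (bits p.2) + linW R

theorem linW_bits (R : List (ℕ × ℕ)) (n : ℕ) : linW R (bits n) = bits (lin R n) := by
  induction R with
  | nil => simp [linW, lin, bits_zero]
  | cons p R ih =>
    simp only [lin, List.foldr_cons] at ih ⊢
    rw [bits_xor, ← ih]
    simp only [linW, LinearMap.add_apply, LinearMap.smulRight_apply, LinearMap.proj_apply]
    congr 1
    cases h : n.testBit p.1
    · simp only [bits, h, cond_false]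
      simp [← bits_zero]
    · simp only [bits, h, cond_true]
      simp

theorem pw_spec (i : Fin 4) (a : ℕ) :
    (X i + X i ^ 2 : P4) ^ a = ((pw a).map fun m => (X i : P4) ^ m).sum := by
  have key : ∀ l : List ℕ, (((l.filter fun m => Nat.choose a m % 2 == 1).map
      fun m => a + m).map fun m => (X i : P4) ^ m).sum =
      (l.map fun m => (X i : P4) ^ (a + m) * (Nat.choose a m : P4)).sum := by
    intro l
    induction l with
    | nil => simp
    | cons m l ih =>
      have hc : ((Nat.choose a m : ℕ) : P4) = ((Nat.choose a m % 2 : ℕ) : P4) := by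
        rw [← map_natCast (C : kk →+* P4), ← map_natCast (C : kk →+* P4), ZMod.natCast_mod]
      rcases Nat.mod_two_eq_zero_or_one (Nat.choose a m) with h | h
      · rw [List.filter_cons_of_neg (by simp [h]), ih, List.map_cons, List.sum_cons, hc, h]
        simp
      · rw [List.filter_cons_of_pos (by simp [h])]
        simp only [List.map_cons, List.sum_cons] at ih ⊢
        rw [ih, hc, h]
        simp
  have hr : ∀ (f : ℕ → P4) (n : ℕ), ((List.range n).map f).sum = ∑ m ∈ Finset.range n, f m := by
    intro f n
    induction n with
    | zero => simp
    | succ n ih => simp [List.range_succ, Finset.sum_range_succ, ih]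
  rw [pw, key, add_comm, add_pow, hr]
  refine Finset.sum_congr rfl fun m hm => ?_
  have hm' : m ≤ a := Nat.lt_succ_iff.1 (Finset.mem_range.1 hm)
  rw [← pow_mul, ← pow_add]
  congr 2
  omega

theorem toPoly_append (l l' : List Exp) : toPoly (l ++ l') = toPoly l + toPoly l' := by
  simp [toPoly]

theorem toPoly_flatMap (l : List ℕ) (g : ℕ → List Exp) :
    toPoly (l.flatMap g) = (l.map fun m => toPoly (g m)).sum := by
  induction l with
  | nil => simp [toPoly]
  | cons m l ih => rw [List.flatMap_cons, toPoly_append, ih]; simp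

theorem sqAll_spec (e : Exp) : sqTotal (mono e) = toPoly (sqAll e) := by
  have hX : ∀ i, sqTotal (X i) = X i + X i ^ 2 := fun i => by simp [sqTotal]
  have h4 : ∀ i j k, toPoly ((pw e.2.2.2).map fun l => (i, j, k, l)) =
      X 0 ^ i * X 1 ^ j * X 2 ^ k * ((pw e.2.2.2).map fun m => (X 3 : P4) ^ m).sum := by
    intro i j k
    rw [← List.sum_map_mul_left]
    simp [toPoly, mono, Function.comp_def]
  simp only [sqAll, toPoly_flatMap, h4, mono, map_mul, map_pow, hX, pw_spec]
  simp only [List.sum_map_mul_left, List.sum_map_mul_right, mul_assoc]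

theorem homComp_toPoly (l : List Exp) :
    homogeneousComponent 9 (toPoly l) = toPoly (l.filter fun x => edeg x == 9) := by
  induction l with
  | nil => simp [toPoly]
  | cons e l ih =>
    simp only [toPoly, List.map_cons, List.sum_cons, map_add] at ih ⊢
    rw [ih, homogeneousComponent_of_mem (mono_homog e)]
    by_cases h : edeg e = 9
    · rw [List.filter_cons_of_pos (by simp [h]), if_pos h.symm]; simp
    · rw [List.filter_cons_of_neg (by simp [h]), if_neg (Ne.symm h)]; simp

theorem sq_spec (e : Exp) : homogeneousComponent 9 (sqTotal (mono e)) = toPoly (sqList e) := by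
  rw [sqAll_spec, homComp_toPoly, sqList]

theorem hit_mem (e : Exp) (h : edeg e < 9) : toPoly (sqList e) ∈ hitSub 9 :=
  Submodule.subset_span ⟨edeg e, h, mono e, mono_homog e, (sq_spec e).symm⟩

theorem hit_le_homog : hitSub 9 ≤ homog 9 := by
  refine Submodule.span_le.2 ?_
  rintro p ⟨d, -, g, -, rfl⟩
  exact homogeneousComponent_mem _ _

theorem phi_hit {p : P4} (hp : p ∈ hitSub 9) : Lam tabT p = 0 := by
  suffices hitSub 9 ≤ LinearMap.ker (Lam tabT) from this hp
  refine Submodule.span_le.2 ?_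
  rintro p ⟨d, hd, g, hg, rfl⟩
  have : homog d ≤ LinearMap.ker ((Lam tabT).comp
      ((homogeneousComponent 9).comp sqTotal.toLinearMap)) := by
    refine homog_le _ fun e he => ?_
    have hA := checkA_ok
    simp only [checkA, List.all_eq_true, List.mem_range] at hA
    have h1 := allE_spec (hA d hd) e he
    simp only [LinearMap.mem_ker, LinearMap.comp_apply, AlgHom.toLinearMap_apply]
    rw [sq_spec, Lam_toPoly, beq_iff_eq.1 h1, bits_zero]
  exact this hg

def del : WW →ₗ[kk] P4 :=
  ∑ k ∈ Finset.range 1000, (LinearMap.proj k : WW →ₗ[kk] kk).smulRight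
    (mono (k % 10, k / 10 % 10, k / 100, 9 - k % 10 - k / 10 % 10 - k / 100))

theorem del_Lam {f : P4} (hf : f ∈ homog 9) : del (Lam encE f) = f := by
  suffices homog 9 ≤ LinearMap.ker (del.comp (Lam encE) - LinearMap.id) by
    have := this hf
    simpa [sub_eq_zero] using this
  refine homog_le _ fun e he => ?_
  obtain ⟨a, b, c, d⟩ := e
  simp only [edeg] at he
  simp only [LinearMap.mem_ker, LinearMap.sub_apply, LinearMap.comp_apply, LinearMap.id_apply,
    sub_eq_zero, Lam_mono]
  simp only [del, LinearMap.sum_apply, LinearMap.smulRight_apply, LinearMap.proj_apply]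
  have hb : ∀ k, bits (encE (a, b, c, d)) k = if a + 10 * b + 100 * c = k then 1 else 0 := by
    intro k
    simp only [bits, encE, Nat.one_shiftLeft, Nat.testBit_two_pow]
    simp
  simp only [hb, ite_smul, one_smul, zero_smul]
  rw [Finset.sum_ite_eq, if_pos (by rw [Finset.mem_range]; omega)]
  congr 1
  have k1 : (a + 10 * b + 100 * c) % 10 = a := by
    rcases Nat.lt_or_ge a 10 with h | h <;> omega
  have k2 : (a + 10 * b + 100 * c) / 10 = b + 10 * c := by omega
  have k3 : (a + 10 * b + 100 * c) / 100 = c := by omega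
  have k4 : (b + 10 * c) % 10 = b := by omega
  have k5 : 9 - a - b - c = d := by omega
  rw [k1, k2, k3, k4, k5]

theorem cert_mem (l : List ℕ) (h : ∀ g ∈ l, edeg (dec g) < 9) :
    bits (xsum (fun e => e.1) (l.map fun g => (xsum encE (sqList (dec g)), 0, 0, 0))) ∈
      (hitSub 9).map (Lam encE) := by
  induction l with
  | nil => simp [xsum, bits_zero]
  | cons g l ih =>
    simp only [List.map_cons, xsum, List.foldr_cons] at ih ⊢
    rw [bits_xor]
    refine Submodule.add_mem _ ?_ (ih fun g hg => h g (List.mem_cons_of_mem _ hg))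
    have h2 := Submodule.mem_map_of_mem (f := Lam encE) (hit_mem (dec g) (h g List.mem_cons_self))
    rw [Lam_toPoly] at h2
    exact h2

theorem hit_of_phi {f : P4} (hf : f ∈ homog 9) (h0 : Lam tabT f = 0) : f ∈ hitSub 9 := by
  have h1 : homog 9 ≤ ((hitSub 9).map (Lam encE)).comap
      (Lam encE + (linW tabS).comp (Lam tabT)) := by
    refine homog_le _ fun e he => ?_
    have hB := allE_spec checkB_ok e he
    rw [Bool.and_eq_true, beq_iff_eq, List.all_eq_true] at hB
    rw [Submodule.mem_comap, LinearMap.add_apply, LinearMap.comp_apply, Lam_mono, Lam_mono,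
      linW_bits, ← bits_xor, hB.2]
    exact cert_mem _ fun g hg => by simpa using hB.1 g hg
  have h2 := h1 hf
  rw [Submodule.mem_comap, LinearMap.add_apply, LinearMap.comp_apply, h0, map_zero, add_zero] at h2
  obtain ⟨h, hh, he⟩ := h2
  have := del_Lam (hit_le_homog hh)
  rw [he, del_Lam hf] at this
  rwa [this]

theorem mono_mul (e e' : Exp) : mono e * mono e' =
    mono (e.1 + e'.1, e.2.1 + e'.2.1, e.2.2.1 + e'.2.2.1, e.2.2.2 + e'.2.2.2) := by
  simp only [mono, pow_add]; ring

theorem X_pow_mono (s : Fin 4) (a : ℕ) :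
    (X s : P4) ^ a = mono (one1 s a 0, one1 s a 1, one1 s a 2, one1 s a 3) := by
  fin_cases s <;> simp [mono, one1]

theorem subst_mono (σ : Equiv.Perm (Fin 4)) (e : Exp) :
    substM (σ.toPEquiv.toMatrix) (mono e) = mono (actE σ e) := by
  have hX : ∀ i, substM (σ.toPEquiv.toMatrix) (X i) = X (σ i) := fun i => by
    simp [substM, PEquiv.toMatrix_apply]
  simp only [mono, map_mul, map_pow, hX]
  rw [X_pow_mono, X_pow_mono, X_pow_mono, X_pow_mono, mono_mul, mono_mul, mono_mul]
  rfl

theorem subst_toPoly (σ : Equiv.Perm (Fin 4)) (l : List Exp) :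
    substM (σ.toPEquiv.toMatrix) (toPoly l) = toPoly (l.map (actE σ)) := by
  induction l with
  | nil => simp [toPoly]
  | cons e l ih =>
    simp only [toPoly, List.map_cons, List.sum_cons, map_add] at ih ⊢
    rw [ih, subst_mono]

theorem edeg_act (σ : Equiv.Perm (Fin 4)) (e : Exp) : edeg (actE σ e) = edeg e := by
  have h : ∀ (s : Fin 4) (a : ℕ), one1 s a 0 + one1 s a 1 + one1 s a 2 + one1 s a 3 = a := by
    intro s a
    fin_cases s <;> simp [one1]
  have h0 := h (σ 0) e.1
  have h1 := h (σ 1) e.2.1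
  have h2 := h (σ 2) e.2.2.1
  have h3 := h (σ 3) e.2.2.2
  simp only [edeg, actE, comp1]
  omega

theorem toPoly_homog {l : List Exp} (h : ∀ e ∈ l, edeg e = 9) : toPoly l ∈ homog 9 := by
  refine list_sum_mem ?_
  intro x hx
  obtain ⟨e, he, rfl⟩ := List.mem_map.1 hx
  have := mono_homog e
  rwa [h e he] at this

theorem inv_of_check {l : List Exp} (h : ∀ e ∈ l, edeg e = 9) (hc : checkC l = true) :
    toPoly l ∈ invPre 9 permSet := by
  refine ⟨toPoly_homog h, ?_⟩
  simp only [SetLike.mem_coe, Submodule.mem_iInf]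
  rintro M ⟨σ, rfl⟩
  simp only [Submodule.mem_comap, LinearMap.sub_apply, AlgHom.toLinearMap_apply, LinearMap.id_apply]
  rw [subst_toPoly]
  refine hit_of_phi (Submodule.sub_mem _ (toPoly_homog ?_) (toPoly_homog h)) ?_
  · intro x hx
    obtain ⟨e, he, rfl⟩ := List.mem_map.1 hx
    rw [edeg_act, h e he]
  · rw [map_sub, Lam_toPoly, Lam_toPoly, sub_eq_zero]
    congr 1
    have hm : ∀ s : Fin 4, s ∈ [0, 1, 2, 3] := by decide
    simp only [checkC, List.all_eq_true] at hc
    have h1 := hc (σ 0) (hm _) (σ 1) (hm _) (σ 2) (hm _) (σ 3) (hm _)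
    have h2 : ![σ 0, σ 1, σ 2, σ 3] = σ := by
      funext i; fin_cases i <;> rfl
    rw [h2] at h1
    simpa using h1

theorem phi_inv {f : P4} (hf : f ∈ invPre 9 permSet) :
    Lam tabT f = linW tabL (Lam tabT f) := by
  obtain ⟨hf9, hfi⟩ := hf
  simp only [SetLike.mem_coe, Submodule.mem_iInf] at hfi
  have hs : ∀ σ : Equiv.Perm (Fin 4),
      ((Lam tabT).comp ((substM σ.toPEquiv.toMatrix).toLinearMap - LinearMap.id)) f = 0 :=
    fun σ => phi_hit (hfi _ ⟨σ, rfl⟩)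
  have hm : ∀ (σ : Equiv.Perm (Fin 4)) (e : Exp),
      ((Lam tabT).comp ((substM σ.toPEquiv.toMatrix).toLinearMap - LinearMap.id)) (mono e) =
        bits (tabT (actE σ e) ^^^ tabT e) := by
    intro σ e
    simp only [LinearMap.comp_apply, LinearMap.sub_apply, AlgHom.toLinearMap_apply,
      LinearMap.id_apply]
    rw [subst_mono, map_sub, Lam_mono, Lam_mono, bits_xor]
    funext j
    exact CharTwo.sub_eq_add _ _
  generalize hD : (fun σ : Equiv.Perm (Fin 4) =>
    (Lam tabT).comp ((substM σ.toPEquiv.toMatrix).toLinearMap - LinearMap.id)) = D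
  replace hs : ∀ σ, D σ f = 0 := by rw [← hD]; exact hs
  replace hm : ∀ σ e, D σ (mono e) = bits (tabT (actE σ e) ^^^ tabT e) := by rw [← hD]; exact hm
  have e0 : ((Equiv.swap 0 1 : Equiv.Perm (Fin 4)) : Fin 4 → Fin 4) = ![1, 0, 2, 3] := by decide
  have e1 : ((Equiv.swap 1 2 : Equiv.Perm (Fin 4)) : Fin 4 → Fin 4) = ![0, 2, 1, 3] := by decide
  have e2 : ((Equiv.swap 2 3 : Equiv.Perm (Fin 4)) : Fin 4 → Fin 4) = ![0, 1, 3, 2] := by decide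
  have key : homog 9 ≤ LinearMap.ker (Lam tabT - ((linW tabL).comp (Lam tabT) +
      ((linW tabR0).comp (D (Equiv.swap 0 1)) + ((linW tabR1).comp (D (Equiv.swap 1 2)) +
        (linW tabR2).comp (D (Equiv.swap 2 3)))))) := by
    refine homog_le _ fun e he => ?_
    have h1 := beq_iff_eq.1 (allE_spec checkD_ok e he)
    simp only [LinearMap.mem_ker, LinearMap.sub_apply, LinearMap.add_apply, LinearMap.comp_apply,
      sub_eq_zero, hm, Lam_mono, linW_bits, ← bits_xor, e0, e1, e2]
    exact congrArg bits h1
  have := key hf9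
  simpa only [LinearMap.mem_ker, LinearMap.sub_apply, LinearMap.add_apply, LinearMap.comp_apply,
    sub_eq_zero, hs, map_zero, add_zero] using this

theorem q1_eq : q11_1 = toPoly ql1 := by
  simp [q11_1, toPoly, ql1, mono, Fin.sum_univ_four]
  ring

theorem q2_eq : q11_2 = toPoly ql2 := by
  simp [q11_2, toPoly, ql2, mono, Fin.sum_univ_four]
  ring

theorem q3_eq : q11_3 = toPoly ql3 := by
  simp [q11_3, toPoly, ql3, mono, Fin.sum_univ_four]
  ring

theorem q4_eq : q11_4 = toPoly ql4 := by
  simp [q11_4, toPoly, ql4, mono]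
  ring

theorem deg1 : ∀ e ∈ ql1, edeg e = 9 := by decide
theorem deg2 : ∀ e ∈ ql2, edeg e = 9 := by decide
theorem deg3 : ∀ e ∈ ql3, edeg e = 9 := by decide
theorem deg4 : ∀ e ∈ ql4, edeg e = 9 := by decide

theorem Qmk_eq_zero {f : P4} (hf : f ∈ hitSub 9) : Qmk 9 f = 0 := by
  simp only [Qmk, LinearMap.comp_apply, Submodule.mkQ_apply, Submodule.Quotient.mk_eq_zero,
    Submodule.mem_comap, Submodule.subtype_apply]
  change homogeneousComponent 9 f ∈ hitSub 9
  have h9 : f ∈ homogeneousSubmodule (Fin 4) kk 9 := hit_le_homog hf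
  rwa [homogeneousComponent_of_mem h9, if_pos rfl]

/-- The subspace of `Σ_4`-invariants of `Q_9` is spanned by the classes of `q₁,…,q₄`. -/
theorem statement_11 :
    QInv 9 permSet =
      Submodule.span kk {Qmk 9 q11_1, Qmk 9 q11_2, Qmk 9 q11_3, Qmk 9 q11_4} := by
  rw [q1_eq, q2_eq, q3_eq, q4_eq]
  apply le_antisymm
  · rintro _ ⟨f, hf, rfl⟩
    have h1 := phi_inv hf
    have hz : f - (Lam tabT f 0 • toPoly ql1 + (Lam tabT f 1 • toPoly ql2 +
        (Lam tabT f 36 • toPoly ql3 + Lam tabT f 10 • toPoly ql4))) ∈ hitSub 9 := by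
      refine hit_of_phi (Submodule.sub_mem _ hf.1 ?_) ?_
      · exact Submodule.add_mem _ (Submodule.smul_mem _ _ (toPoly_homog deg1))
          (Submodule.add_mem _ (Submodule.smul_mem _ _ (toPoly_homog deg2))
            (Submodule.add_mem _ (Submodule.smul_mem _ _ (toPoly_homog deg3))
              (Submodule.smul_mem _ _ (toPoly_homog deg4))))
      · rw [map_sub, sub_eq_zero]
        refine h1.trans ?_
        simp only [tabL_ok, linW, LinearMap.add_apply, LinearMap.smulRight_apply,
          LinearMap.proj_apply, LinearMap.zero_apply, add_zero, map_add, map_smul, Lam_toPoly]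
    have h2 := Qmk_eq_zero hz
    rw [map_sub, sub_eq_zero] at h2
    rw [h2]
    simp only [map_add, map_smul]
    refine Submodule.add_mem _ (Submodule.smul_mem _ _ (Submodule.subset_span (by simp)))
      (Submodule.add_mem _ (Submodule.smul_mem _ _ (Submodule.subset_span (by simp)))
        (Submodule.add_mem _ (Submodule.smul_mem _ _ (Submodule.subset_span (by simp)))
          (Submodule.smul_mem _ _ (Submodule.subset_span (by simp)))))
  · refine Submodule.span_le.2 ?_
    rintro x (rfl | rfl | rfl | rfl)
    · exact Submodule.mem_map_of_mem (inv_of_check deg1 checkC1_ok)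
    · exact Submodule.mem_map_of_mem (inv_of_check deg2 checkC2_ok)
    · exact Submodule.mem_map_of_mem (inv_of_check deg3 checkC3_ok)
    · exact Submodule.mem_map_of_mem (inv_of_check deg4 checkC4_ok)

end
end
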